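/- arXiv:math-ph/0606002 — 6 statements merged into one kernel-verified Lean document; each statement's English description precedes it below -/
import Mathlib

section
/- For every positive integer N the following identity of finite counts holds: #{(r,s) ∈ ℤ² : r ≥ 2, s ≥ 1, rs = N} − #{(r,s) ∈ ℤ² : r ≥ 2, s ≥ 1, rs = N−1} = ∑_{p>q≥2, gcd(p,q)=1} ( #{k ∈ ℤ∖{0} : (kp+1)(kq+1) = N} − #{k ∈ ℤ∖{0} : (kp+1)(kq−1) = N−1} ), where the outer sum ranges over pairs of relatively prime integers p > q ≥ 2 and has only finitely many nonzero summands. (Equivalently, as formal power series, ∑_{r≥2,s≥1}(x^{rs}−x^{rs+1}) = ∑_{p>q≥2,(p,q)=1} ∑_{k∈ℤ∖{0}} (x^{(kp+1)(kq+1)} − x^{(kp+1)(kq−1)+1}).) -/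
/-!
Put `a = k p`, `b = k q`. As `(p, q)` runs over the coprime pairs with `p > q ≥ 2` and `k` over
the nonzero integers, `(a, b)` runs over the pairs of integers of the same sign with `|b| < |a|`
and `b ∤ a` (`sum_card_eq_ncard`). So the right-hand side is the number of such pairs with
`(a + 1)(b + 1) = N` minus the number with `(a + 1)(b - 1) = N - 1`.

For `N ≥ 2` the condition `b ∤ a` may be dropped: on the pairs `(b m, b)` the two equations are
exchanged by the shift `b ↦ b + 1` (`ncard_divPairs`). The solutions without that condition are
factorizations of `N` and `N - 1`, up to signs and order. They give every factorization `N = r s`, `r ≥ 2`, except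
those with `r = s` (`ncard_allPairs_relPlus`), and every factorization `N - 1 = r s`, `r ≥ 2`,
except those with `r = s + 2` (`ncard_allPairs_relMinus`). The two exceptional sets are
equinumerous because `r² - 1 = (r + 1)(r - 1)` (`ncard_diagonal`). For `N = 1` every count is `0`;
this case is separate because `(a + 1)(b - 1) = 0` has infinitely many solutions with `b = 1`.
-/

/-!
Statement 7: for every positive integer `N`,
`#{(r,s) : r ≥ 2, s ≥ 1, rs = N} − #{(r,s) : r ≥ 2, s ≥ 1, rs = N−1}
  = ∑_{p>q≥2, gcd(p,q)=1} (#{k ≠ 0 : (kp+1)(kq+1) = N} − #{k ≠ 0 : (kp+1)(kq−1) = N−1})`,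
the outer sum having only finitely many nonzero summands.
-/

/-- The number of factorizations `n = r·s` with `r ≥ 2`, `s ≥ 1`. -/
noncomputable def countRS (n : ℤ) : ℕ :=
  Nat.card {p : ℤ × ℤ // 2 ≤ p.1 ∧ 1 ≤ p.2 ∧ p.1 * p.2 = n}

/-- The number of `k ∈ ℤ ∖ {0}` with `(kp+1)(kq+1) = n`. -/
noncomputable def countK₁ (p q : ℕ) (n : ℤ) : ℕ :=
  Nat.card {k : ℤ // k ≠ 0 ∧ (k * p + 1) * (k * q + 1) = n}

/-- The number of `k ∈ ℤ ∖ {0}` with `(kp+1)(kq−1) = n`. -/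
noncomputable def countK₂ (p q : ℕ) (n : ℤ) : ℕ :=
  Nat.card {k : ℤ // k ≠ 0 ∧ (k * p + 1) * (k * q - 1) = n}

/-! ### Signed pairs and their directions -/

/-- The signed pairs `(k p, k q)`, with `k ≠ 0` and `p > q ≥ 2` coprime, that satisfy `R`. They are
characterised intrinsically: same sign, `|b| < |a|`, and `b ∤ a` (which says `q ≠ 1`). -/
def pairSet (R : ℤ → ℤ → Prop) : Set (ℤ × ℤ) :=
  {x | |x.2| < |x.1| ∧ 0 < x.1 * x.2 ∧ ¬ x.2 ∣ x.1 ∧ R x.1 x.2}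

/-- The direction of a pair: its coordinates in absolute value, divided by their gcd.
The value at `(0, 0)` is the junk value `(0, 0)`; every pair in question is nonzero. -/
def pairSlope (x : ℤ × ℤ) : ℕ × ℕ :=
  (x.1.natAbs / Nat.gcd x.1.natAbs x.2.natAbs, x.2.natAbs / Nat.gcd x.1.natAbs x.2.natAbs)

lemma pairSlope_mul {p q : ℕ} (h : Nat.Coprime p q) {k : ℤ} (hk : k ≠ 0) :
    pairSlope (k * p, k * q) = (p, q) := by
  have hk' : 0 < k.natAbs := Int.natAbs_pos.mpr hk
  simp only [pairSlope, Int.natAbs_mul, Int.natAbs_natCast, Nat.gcd_mul_left, h.gcd_eq_one, mul_one]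
  rw [Nat.mul_div_cancel_left _ hk', Nat.mul_div_cancel_left _ hk']

lemma mul_mem_pairSet {R : ℤ → ℤ → Prop} {p q : ℕ} (h : q < p ∧ 2 ≤ q ∧ Nat.Coprime p q)
    {k : ℤ} (hk : k ≠ 0) (hR : R (k * p) (k * q)) : ((k * p, k * q) : ℤ × ℤ) ∈ pairSet R := by
  obtain ⟨h1, h2, h3⟩ := h
  refine ⟨?_, ?_, ?_, hR⟩
  · simp only [abs_mul, Nat.abs_cast]
    exact mul_lt_mul_of_pos_left (by exact_mod_cast h1) (abs_pos.mpr hk)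
  · have : (0 : ℤ) < p * q := by
      have : 0 < p * q := Nat.mul_pos (by omega) (by omega)
      exact_mod_cast this
    have hk2 : 0 < k * k := mul_self_pos.mpr hk
    have := mul_pos hk2 this
    simp only
    linarith [show k * p * (k * q) = k * k * (p * q) by ring]
  · intro hd
    have hd' : (q : ℤ) ∣ p := (mul_dvd_mul_iff_left hk).mp hd
    have := Nat.Coprime.eq_one_of_dvd h3.symm (by exact_mod_cast hd')
    omega

lemma exists_of_mem_pairSet {R : ℤ → ℤ → Prop} {x : ℤ × ℤ} (hx : x ∈ pairSet R) :
    ∃ (k : ℤ) (p q : ℕ), k ≠ 0 ∧ (q < p ∧ 2 ≤ q ∧ Nat.Coprime p q) ∧ x = (k * p, k * q) := by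
  obtain ⟨a, b⟩ := x
  obtain ⟨h1, h2, h3, -⟩ := hx
  simp only at h1 h2 h3
  obtain ⟨p, q, hpq, ha, hb⟩ := Nat.exists_coprime a.natAbs b.natAbs
  set g := Nat.gcd a.natAbs b.natAbs
  have ha0 : a ≠ 0 := by rintro rfl; simp at h2
  have hb0 : b ≠ 0 := by rintro rfl; simp at h2
  have hg : 0 < g := Nat.gcd_pos_of_pos_left _ (Int.natAbs_pos.mpr ha0)
  have hlt : b.natAbs < a.natAbs := by
    rw [Int.abs_eq_natAbs, Int.abs_eq_natAbs] at h1
    exact_mod_cast h1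
  have hqp : q < p := by
    rw [ha, hb] at hlt
    exact lt_of_mul_lt_mul_right hlt (Nat.zero_le _)
  have hq0 : q ≠ 0 := by
    rintro rfl
    simp at hb
    exact hb0 hb
  have hq1 : q ≠ 1 := by
    rintro rfl
    apply h3
    rw [← Int.natAbs_dvd_natAbs, hb, ha, one_mul]
    exact Dvd.intro_left _ rfl
  have ha' : |a| = p * g := by rw [Int.abs_eq_natAbs, ha]; push_cast; ring
  have hb' : |b| = q * g := by rw [Int.abs_eq_natAbs, hb]; push_cast; ring
  rcases lt_or_gt_of_ne ha0 with hneg | hpos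
  · have hbneg : b < 0 := by nlinarith
    rw [abs_of_neg hneg] at ha'
    rw [abs_of_neg hbneg] at hb'
    exact ⟨-g, p, q, by omega, ⟨hqp, by omega, hpq⟩, Prod.ext (by simp; linarith) (by simp; linarith)⟩
  · have hbpos : 0 < b := by nlinarith
    rw [abs_of_pos hpos] at ha'
    rw [abs_of_pos hbpos] at hb'
    exact ⟨g, p, q, by omega, ⟨hqp, by omega, hpq⟩, Prod.ext (by simp; linarith) (by simp; linarith)⟩

/-- The coprime pairs `p > q ≥ 2` with `p < M`. -/
def coprimePairs (M : ℕ) : Finset (ℕ × ℕ) :=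
  (Finset.range M ×ˢ Finset.range M).filter fun x => x.2 < x.1 ∧ 2 ≤ x.2 ∧ Nat.Coprime x.1 x.2

/-- Summing the number of admissible multipliers `k` over all directions `(p, q)` counts the
pairs `(k p, k q)`: `pairSet R` is the disjoint union of its fibres under `pairSlope`. -/
lemma sum_card_eq_ncard {R : ℤ → ℤ → Prop} {M : ℕ} (hfin : (pairSet R).Finite)
    (hM : ∀ x ∈ pairSet R, |x.1| < M) :
    ∑ x ∈ coprimePairs M, Nat.card {k : ℤ // k ≠ 0 ∧ R (k * x.1) (k * x.2)} =
      (pairSet R).ncard := by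
  classical
  rw [Set.ncard_eq_toFinset_card _ hfin]
  have hmaps : Set.MapsTo pairSlope (hfin.toFinset : Set (ℤ × ℤ)) (coprimePairs M : Set (ℕ × ℕ)) := by
    intro x hx
    have hx' : x ∈ pairSet R := by simpa using hx
    have hb := hM x hx'
    obtain ⟨k, p, q, hk, h, rfl⟩ := exists_of_mem_pairSet hx'
    rw [pairSlope_mul h.2.2 hk]
    have hpM : p < M := by
      have h1 : 1 ≤ |k| := Int.one_le_abs hk
      simp only [abs_mul, Nat.abs_cast] at hb
      have : (p : ℤ) < M := by nlinarith
      exact_mod_cast this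
    simp [coprimePairs, h.1, h.2.1, hpM, lt_trans h.1 hpM]
    exact h.2.2
  rw [Finset.card_eq_sum_card_fiberwise hmaps]
  refine Finset.sum_congr rfl fun x hx => ?_
  obtain ⟨p, q⟩ := x
  have h : q < p ∧ 2 ≤ q ∧ Nat.Coprime p q := by
    simp only [coprimePairs, Finset.mem_filter] at hx
    exact hx.2
  have hp0 : (p : ℤ) ≠ 0 := by have := h.1; omega
  have hinj : Function.Injective fun k : ℤ => ((k * p, k * q) : ℤ × ℤ) := by
    intro k l hkl
    exact mul_right_cancel₀ hp0 (Prod.ext_iff.mp hkl).1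
  change Nat.card {k : ℤ | k ≠ 0 ∧ R (k * p) (k * q)} = _
  rw [Nat.card_coe_set_eq, ← Set.ncard_image_of_injective _ hinj, ← Set.ncard_coe_finset]
  congr 1
  ext y
  simp only [Set.mem_image, Set.mem_ofPred_eq, Finset.coe_filter, Set.Finite.mem_toFinset]
  constructor
  · rintro ⟨k, ⟨hk, hR⟩, rfl⟩
    exact ⟨mul_mem_pairSet h hk hR, pairSlope_mul h.2.2 hk⟩
  · rintro ⟨hy, hs⟩
    have hR := hy.2.2.2
    obtain ⟨k, p', q', hk, h', rfl⟩ := exists_of_mem_pairSet hy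
    rw [pairSlope_mul h'.2.2 hk] at hs
    obtain ⟨rfl, rfl⟩ := Prod.ext_iff.mp hs
    exact ⟨k, ⟨hk, hR⟩, rfl⟩

/-! ### Pairs with and without the divisibility condition -/

/-- The pairs in `pairSet R` together with those satisfying `b ∣ a`. -/
def allPairs (R : ℤ → ℤ → Prop) : Set (ℤ × ℤ) :=
  {x | |x.2| < |x.1| ∧ 0 < x.1 * x.2 ∧ R x.1 x.2}

/-- The part of `allPairs R` with `b ∣ a`. -/
def divPairs (R : ℤ → ℤ → Prop) : Set (ℤ × ℤ) :=
  {x | |x.2| < |x.1| ∧ 0 < x.1 * x.2 ∧ x.2 ∣ x.1 ∧ R x.1 x.2}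

lemma ncard_allPairs {R : ℤ → ℤ → Prop} (hfin : (allPairs R).Finite) :
    (allPairs R).ncard = (pairSet R).ncard + (divPairs R).ncard := by
  have h1 : pairSet R ⊆ allPairs R := fun x hx => ⟨hx.1, hx.2.1, hx.2.2.2⟩
  have h2 : divPairs R ⊆ allPairs R := fun x hx => ⟨hx.1, hx.2.1, hx.2.2.2⟩
  rw [← Set.ncard_union_eq _ (hfin.subset h1) (hfin.subset h2)]
  · congr 1
    ext x
    simp only [allPairs, pairSet, divPairs, Set.mem_union, Set.mem_ofPred_eq]
    tauto
  · rw [Set.disjoint_left]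
    intro x hx hx'
    exact hx.2.2.1 hx'.2.2.1

/-- The equation whose solutions are counted with sign `+`, for `(a, b) = (k p, k q)`. -/
def relPlus (n : ℤ) (a b : ℤ) : Prop := (a + 1) * (b + 1) = n

/-- The equation whose solutions are counted with sign `-`, for `(a, b) = (k p, k q)`. -/
def relMinus (n : ℤ) (a b : ℤ) : Prop := (a + 1) * (b - 1) = n

/-- The positive factorizations `n = r s` with `r ≥ 2`. -/
def rsSet (n : ℤ) : Set (ℤ × ℤ) := {x | 2 ≤ x.1 ∧ 1 ≤ x.2 ∧ x.1 * x.2 = n}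

lemma abs_le_abs_of_dvd_int {d n : ℤ} (hn : n ≠ 0) (h : d ∣ n) : |d| ≤ |n| :=
  Int.le_of_dvd (abs_pos.mpr hn) ((abs_dvd_abs d n).mpr h)

lemma finite_factorizations {n : ℤ} (hn : n ≠ 0) : {x : ℤ × ℤ | x.1 * x.2 = n}.Finite := by
  refine ((Set.finite_Icc (-|n|) |n|).prod (Set.finite_Icc (-|n|) |n|)).subset ?_
  rintro ⟨u, v⟩ h
  have h : u * v = n := h
  exact ⟨abs_le.mp (abs_le_abs_of_dvd_int hn (Dvd.intro _ h)),
    abs_le.mp (abs_le_abs_of_dvd_int hn (Dvd.intro_left _ h))⟩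

lemma finite_rsSet (n : ℤ) : (rsSet n).Finite := by
  by_cases hn : n = 0
  · subst hn
    convert Set.finite_empty
    ext x
    simp only [rsSet, Set.mem_ofPred_eq, Set.mem_empty_iff_false, iff_false]
    rintro ⟨h1, h2, h3⟩
    nlinarith
  · exact (finite_factorizations hn).subset fun x hx => hx.2.2

lemma finite_allPairs_relPlus {n : ℤ} (hn : n ≠ 0) : (allPairs (relPlus n)).Finite := by
  refine ((finite_factorizations hn).image fun x => (x.1 - 1, x.2 - 1)).subset ?_
  rintro ⟨a, b⟩ h
  exact ⟨(a + 1, b + 1), h.2.2, by simp⟩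

lemma finite_allPairs_relMinus {n : ℤ} (hn : n ≠ 0) : (allPairs (relMinus n)).Finite := by
  refine ((finite_factorizations hn).image fun x => (x.1 - 1, x.2 + 1)).subset ?_
  rintro ⟨a, b⟩ h
  exact ⟨(a + 1, b - 1), h.2.2, by simp⟩

/-! ### Cancellation of the pairs with `b ∣ a` -/

/-- A pair `|b| < |a|`, `0 < a b`, is one of `a > b > 0` and `a < b < 0`. -/
lemma sign_cases {a b : ℤ} : (|b| < |a| ∧ 0 < a * b) ↔ (0 < b ∧ b < a) ∨ (b < 0 ∧ a < b) := by
  constructor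
  · rintro ⟨h1, h2⟩
    rcases pos_and_pos_or_neg_and_neg_of_mul_pos h2 with ⟨ha, hb⟩ | ⟨ha, hb⟩
    · rw [abs_of_pos ha, abs_of_pos hb] at h1
      exact Or.inl ⟨hb, h1⟩
    · rw [abs_of_neg ha, abs_of_neg hb] at h1
      exact Or.inr ⟨hb, by linarith⟩
  · rintro (⟨h1, h2⟩ | ⟨h1, h2⟩)
    · rw [abs_of_pos h1, abs_of_pos (by omega)]
      exact ⟨h2, by nlinarith⟩
    · rw [abs_of_neg h1, abs_of_neg (by omega)]
      exact ⟨by omega, by nlinarith⟩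

/-- A pair with `b ∣ a`, same sign, `|b| < |a|`, is `(b m, b)` with `m ≥ 2`. -/
lemma dvd_cases {R : ℤ → ℤ → Prop} {x : ℤ × ℤ} :
    x ∈ divPairs R ↔ ∃ b m : ℤ, b ≠ 0 ∧ 2 ≤ m ∧ R (b * m) b ∧ x = (b * m, b) := by
  constructor
  · obtain ⟨a, b⟩ := x
    rintro ⟨h1, h2, ⟨m, hm⟩, h4⟩
    simp only at h1 h2 hm h4
    subst hm
    have hb : b ≠ 0 := by rintro rfl; simp at h2
    refine ⟨b, m, hb, ?_, h4, rfl⟩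
    rcases sign_cases.mp ⟨h1, h2⟩ with ⟨h, h'⟩ | ⟨h, h'⟩
    · nlinarith
    · nlinarith
  · rintro ⟨b, m, hb, hm, hR, rfl⟩
    have : |b| < |b * m| ∧ 0 < b * m * b := by
      rw [sign_cases]
      rcases lt_or_gt_of_ne hb with h | h
      · exact Or.inr ⟨h, by nlinarith⟩
      · exact Or.inl ⟨h, by nlinarith⟩
    exact ⟨this.1, this.2, Dvd.intro _ rfl, hR⟩

/-- The terms with `b ∣ a` cancel: `(b m + 1)(b + 1) = N` is the same equation as
`((b + 1) m + 1)((b + 1) - 1) = N - 1`, so `(b m, b) ↦ ((b + 1) m, b + 1)` is a bijection.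
Neither `b = -1` on the left nor `b + 1 = 1` on the right can occur, as `N ≠ 0, 1`. -/
lemma ncard_divPairs {N : ℤ} (hN : 2 ≤ N) :
    (divPairs (relPlus N)).ncard = (divPairs (relMinus (N - 1))).ncard := by
  refine Set.ncard_congr (fun x _ => (x.1 + x.1 / x.2, x.2 + 1)) ?_ ?_ ?_
  · intro x hx
    obtain ⟨b, m, hb, hm, hR, rfl⟩ := dvd_cases.mp hx
    unfold relPlus at hR
    refine dvd_cases.mpr ⟨b + 1, m, ?_, hm, ?_, ?_⟩
    · intro h
      rw [h] at hR
      omega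
    · unfold relMinus
      linarith
    · simp only [Int.mul_ediv_cancel_left _ hb]
      exact Prod.ext (by simp; ring) rfl
  · intro x y hx hy h
    obtain ⟨b, m, hb, hm, hR, rfl⟩ := dvd_cases.mp hx
    obtain ⟨b', m', hb', hm', hR', rfl⟩ := dvd_cases.mp hy
    simp only [Int.mul_ediv_cancel_left _ hb, Int.mul_ediv_cancel_left _ hb', Prod.mk.injEq] at h
    obtain ⟨h1, h2⟩ := h
    obtain rfl : b = b' := by omega
    have hb1 : b + 1 ≠ 0 := by
      intro h
      unfold relPlus at hR
      rw [h] at hR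
      omega
    obtain rfl : m = m' := mul_left_cancel₀ hb1 (by linarith)
    rfl
  · intro y hy
    obtain ⟨b, m, hb, hm, hR, rfl⟩ := dvd_cases.mp hy
    unfold relMinus at hR
    have hb1 : b - 1 ≠ 0 := by
      intro h
      rw [h] at hR
      omega
    refine ⟨((b - 1) * m, b - 1), dvd_cases.mpr ⟨b - 1, m, hb1, hm, ?_, rfl⟩, ?_⟩
    · unfold relPlus
      linarith
    · simp only [Int.mul_ediv_cancel_left _ hb1]
      exact Prod.ext (by simp; ring) (by simp)

/-! ### Pairs as factorizations -/

/-- The pairs `a > b > 0` give the factorizations `(r, s) = (b + 1, a + 1)` with `2 ≤ r < s`,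
and the pairs `a < b < 0` give those with `r > s ≥ 1`, as `(r, s) = (-a - 1, -b - 1)`. -/
lemma ncard_allPairs_relPlus {N : ℤ} (hN : 2 ≤ N) :
    (allPairs (relPlus N)).ncard = (rsSet N \ {x | x.1 = x.2}).ncard := by
  refine Set.ncard_congr
    (fun x _ => if 0 < x.2 then (x.2 + 1, x.1 + 1) else (-x.1 - 1, -x.2 - 1)) ?_ ?_ ?_
  · rintro ⟨a, b⟩ ⟨h1, h2, h3⟩
    simp only [relPlus] at h1 h2 h3
    rcases sign_cases.mp ⟨h1, h2⟩ with ⟨h, h'⟩ | ⟨h, h'⟩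
    · simp only [h, if_true]
      exact ⟨⟨by simp; omega, by simp; omega, by simp; linarith⟩, by simp; omega⟩
    · simp only [show ¬ 0 < b by omega, if_false]
      have : b ≠ -1 := by rintro rfl; omega
      exact ⟨⟨by simp; omega, by simp; omega, by simp; linarith⟩, by simp; omega⟩
  · rintro ⟨a, b⟩ ⟨a', b'⟩ ⟨h1, h2, h3⟩ ⟨h1', h2', h3'⟩ h
    have c := sign_cases.mp ⟨h1, h2⟩
    have c' := sign_cases.mp ⟨h1', h2'⟩
    simp only at c c' h
    split_ifs at h <;> simp only [Prod.mk.injEq] at h ⊢ <;> omega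
  · rintro ⟨r, s⟩ ⟨⟨h1, h2, h3⟩, h4⟩
    simp only [Set.mem_ofPred_eq] at h1 h2 h3 h4
    rcases lt_or_gt_of_ne h4 with h | h
    · have c := sign_cases.mpr (Or.inl (⟨by omega, by omega⟩ : 0 < r - 1 ∧ r - 1 < s - 1))
      refine ⟨(s - 1, r - 1), ⟨c.1, c.2, ?_⟩, ?_⟩
      · simp only [relPlus]
        linarith
      · simp only [show 0 < r - 1 by omega, if_true]
        simp
    · have c := sign_cases.mpr (Or.inr (⟨by omega, by omega⟩ : -s - 1 < 0 ∧ -r - 1 < -s - 1))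
      refine ⟨(-r - 1, -s - 1), ⟨c.1, c.2, ?_⟩, ?_⟩
      · simp only [relPlus]
        linarith
      · simp only [show ¬ 0 < -s - 1 by omega, if_false]
        simp

/-- The pairs `a > b > 0` give the factorizations `(r, s) = (a + 1, b - 1)` with `r ≥ s + 3`,
and the pairs `a < b < 0` give those with `r ≤ s + 1`, as `(r, s) = (-b + 1, -a - 1)`. -/
lemma ncard_allPairs_relMinus {n : ℤ} (hn : 1 ≤ n) :
    (allPairs (relMinus n)).ncard = (rsSet n \ {x | x.1 = x.2 + 2}).ncard := by
  refine Set.ncard_congr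
    (fun x _ => if 0 < x.2 then (x.1 + 1, x.2 - 1) else (-x.2 + 1, -x.1 - 1)) ?_ ?_ ?_
  · rintro ⟨a, b⟩ ⟨h1, h2, h3⟩
    simp only [relMinus] at h1 h2 h3
    rcases sign_cases.mp ⟨h1, h2⟩ with ⟨h, h'⟩ | ⟨h, h'⟩
    · simp only [h, if_true]
      have : b ≠ 1 := by rintro rfl; omega
      exact ⟨⟨by simp; omega, by simp; omega, by simp; linarith⟩, by simp; omega⟩
    · simp only [show ¬ 0 < b by omega, if_false]
      exact ⟨⟨by simp; omega, by simp; omega, by simp; linarith⟩, by simp; omega⟩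
  · rintro ⟨a, b⟩ ⟨a', b'⟩ ⟨h1, h2, h3⟩ ⟨h1', h2', h3'⟩ h
    have c := sign_cases.mp ⟨h1, h2⟩
    have c' := sign_cases.mp ⟨h1', h2'⟩
    simp only at c c' h
    split_ifs at h <;> simp only [Prod.mk.injEq] at h ⊢ <;> omega
  · rintro ⟨r, s⟩ ⟨⟨h1, h2, h3⟩, h4⟩
    simp only [Set.mem_ofPred_eq] at h1 h2 h3 h4
    rcases lt_or_gt_of_ne h4 with h | h
    · have c := sign_cases.mpr (Or.inr (⟨by omega, by omega⟩ : -r + 1 < 0 ∧ -s - 1 < -r + 1))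
      refine ⟨(-s - 1, -r + 1), ⟨c.1, c.2, ?_⟩, ?_⟩
      · simp only [relMinus]
        linarith
      · simp only [show ¬ 0 < -r + 1 by omega, if_false]
        simp
    · have c := sign_cases.mpr (Or.inl (⟨by omega, by omega⟩ : 0 < s + 1 ∧ s + 1 < r - 1))
      refine ⟨(r - 1, s + 1), ⟨c.1, c.2, ?_⟩, ?_⟩
      · simp only [relMinus]
        linarith
      · simp only [show 0 < s + 1 by omega, if_true]
        simp

/-- `N = r²` if and only if `N - 1 = (r + 1)(r - 1)`. -/
lemma ncard_diagonal (N : ℤ) :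
    (rsSet N ∩ {x | x.1 = x.2}).ncard = (rsSet (N - 1) ∩ {x | x.1 = x.2 + 2}).ncard := by
  refine Set.ncard_congr (fun x _ => (x.1 + 1, x.2 - 1)) ?_ ?_ ?_
  · rintro ⟨r, s⟩ ⟨⟨h1, h2, h3⟩, h4⟩
    simp only [Set.mem_ofPred_eq] at h1 h2 h3 h4
    subst h4
    exact ⟨⟨by simp; omega, by simp; omega, by simp; linarith⟩, by simp; omega⟩
  · rintro ⟨r, s⟩ ⟨r', s'⟩ - - h
    simpa using h
  · rintro ⟨r, s⟩ ⟨⟨h1, h2, h3⟩, h4⟩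
    simp only [Set.mem_ofPred_eq] at h1 h2 h3 h4
    subst h4
    refine ⟨(s + 1, s + 1), ⟨⟨by simp; omega, by simp; omega, by simp; linarith⟩, rfl⟩, ?_⟩
    exact Prod.ext (by simp; ring) (by simp)

lemma pairSet_subset (R : ℤ → ℤ → Prop) : pairSet R ⊆ allPairs R :=
  fun _ hx => ⟨hx.1, hx.2.1, hx.2.2.2⟩

/-- The solutions of `(a + 1)(b - 1) = 0` have `a = -1`, too small for `0 < |b| < |a|`, or `b = 1`,
which divides `a`. -/
lemma pairSet_relMinus_zero : pairSet (relMinus 0) = ∅ := by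
  ext ⟨a, b⟩
  simp only [Set.mem_empty_iff_false, iff_false]
  rintro ⟨h1, h2, h3, h4⟩
  simp only [relMinus, mul_eq_zero] at h1 h2 h3 h4
  have c := sign_cases.mp ⟨h1, h2⟩
  rcases h4 with h | h
  · omega
  · obtain rfl : b = 1 := by omega
    exact h3 (one_dvd _)

lemma pairSet_relPlus_one : pairSet (relPlus 1) = ∅ := by
  ext ⟨a, b⟩
  simp only [Set.mem_empty_iff_false, iff_false]
  rintro ⟨h1, h2, h3, h4⟩
  simp only [relPlus] at h1 h2 h3 h4
  have c := sign_cases.mp ⟨h1, h2⟩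
  have := Int.eq_one_or_neg_one_of_mul_eq_one' h4
  omega

lemma ncard_rsSet_of_le_one {n : ℤ} (hn : n ≤ 1) : (rsSet n).ncard = 0 := by
  convert Set.ncard_empty (ℤ × ℤ)
  ext x
  simp only [rsSet, Set.mem_ofPred_eq, Set.mem_empty_iff_false, iff_false]
  rintro ⟨h1, h2, h3⟩
  nlinarith

lemma ncard_identity {N : ℤ} (hN : 1 ≤ N) :
    ((rsSet N).ncard : ℤ) - (rsSet (N - 1)).ncard =
      (pairSet (relPlus N)).ncard - (pairSet (relMinus (N - 1))).ncard := by
  rcases hN.eq_or_lt with rfl | hN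
  · rw [ncard_rsSet_of_le_one le_rfl, ncard_rsSet_of_le_one (by norm_num), sub_self,
      pairSet_relPlus_one, sub_self, pairSet_relMinus_zero]
    simp
  · have h1 := ncard_allPairs (finite_allPairs_relPlus (n := N) (by omega))
    have h2 := ncard_allPairs (finite_allPairs_relMinus (n := N - 1) (by omega))
    have h3 := ncard_divPairs (N := N) (by omega)
    have h4 := ncard_allPairs_relPlus (N := N) (by omega)
    have h5 := ncard_allPairs_relMinus (n := N - 1) (by omega)
    have h6 := ncard_diagonal N
    have h7 := Set.ncard_inter_add_ncard_sdiff_eq_ncard (rsSet N) {x | x.1 = x.2} (finite_rsSet N)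
    have h8 := Set.ncard_inter_add_ncard_sdiff_eq_ncard (rsSet (N - 1)) {x | x.1 = x.2 + 2}
      (finite_rsSet (N - 1))
    omega

/-! ### Finiteness of the sum over directions -/

lemma finite_pairSet_relMinus (n : ℤ) : (pairSet (relMinus n)).Finite := by
  by_cases hn : n = 0
  · rw [hn, pairSet_relMinus_zero]
    exact Set.finite_empty
  · exact (finite_allPairs_relMinus hn).subset (pairSet_subset _)

lemma lt_of_mem_relPlus {N : ℕ} (hN : 0 < N) :
    ∀ x ∈ pairSet (relPlus N), |x.1| < ((N + 2 : ℕ) : ℤ) := by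
  rintro ⟨a, b⟩ ⟨-, -, -, h⟩
  have hd : |a + 1| ≤ |(N : ℤ)| := abs_le_abs_of_dvd_int (by omega) (Dvd.intro _ h)
  simp only
  rw [abs_le, abs_of_pos (show (0 : ℤ) < N by omega)] at hd
  rw [abs_lt]
  push_cast
  omega

lemma lt_of_mem_relMinus {N : ℕ} (hN : 0 < N) :
    ∀ x ∈ pairSet (relMinus ((N : ℤ) - 1)), |x.1| < ((N + 2 : ℕ) : ℤ) := by
  intro x hx
  by_cases h1 : (N : ℤ) - 1 = 0
  · rw [h1, pairSet_relMinus_zero] at hx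
    exact hx.elim
  · obtain ⟨a, b⟩ := x
    obtain ⟨-, -, -, h⟩ := hx
    have hd : |a + 1| ≤ |(N : ℤ) - 1| := abs_le_abs_of_dvd_int h1 (Dvd.intro _ h)
    simp only
    rw [abs_le, abs_of_pos (show (0 : ℤ) < N - 1 by omega)] at hd
    rw [abs_lt]
    push_cast
    omega

lemma card_eq_zero_of_le {R : ℤ → ℤ → Prop} {M : ℕ} (hM : ∀ x ∈ pairSet R, |x.1| < M) {p q : ℕ}
    (h : q < p ∧ 2 ≤ q ∧ Nat.Coprime p q) (hp : M ≤ p) :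
    Nat.card {k : ℤ // k ≠ 0 ∧ R (k * p) (k * q)} = 0 := by
  have : IsEmpty {k : ℤ // k ≠ 0 ∧ R (k * p) (k * q)} := by
    refine ⟨fun ⟨k, hk, hR⟩ => ?_⟩
    have hb := hM _ (mul_mem_pairSet h hk hR)
    have h1 : 1 ≤ |k| := Int.one_le_abs hk
    simp only [abs_mul, Nat.abs_cast] at hb
    have : (M : ℤ) ≤ p := by exact_mod_cast hp
    nlinarith
  exact Nat.card_of_isEmpty

/-- A sum over coprime pairs `p > q ≥ 2` whose terms vanish for `p ≥ M` is a finite sum. -/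
lemma finsum_coprimePairs {f : ℕ → ℕ → ℤ} {M : ℕ}
    (hf : ∀ p q, q < p ∧ 2 ≤ q ∧ Nat.Coprime p q → M ≤ p → f p q = 0) :
    ∑ᶠ (p : ℕ) (q : ℕ) (_ : q < p ∧ 2 ≤ q ∧ Nat.Coprime p q), f p q =
      ∑ x ∈ coprimePairs M, f x.1 x.2 := by
  have hin : ∀ p q, M ≤ p →
      (∑ᶠ (_ : q < p ∧ 2 ≤ q ∧ Nat.Coprime p q), f p q) = 0 := by
    intro p q hp
    by_cases h : q < p ∧ 2 ≤ q ∧ Nat.Coprime p q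
    · rw [finsum_eq_if, if_pos h, hf p q h hp]
    · rw [finsum_eq_if, if_neg h]
  rw [coprimePairs, Finset.sum_filter, Finset.sum_product,
    finsum_eq_sum_of_support_subset (s := Finset.range M)]
  · refine Finset.sum_congr rfl fun p hp => ?_
    rw [finsum_eq_sum_of_support_subset (s := Finset.range M)]
    · exact Finset.sum_congr rfl fun q _ => finsum_eq_if
    · intro q hq
      rw [Function.mem_support, finsum_eq_if] at hq
      have := (ite_ne_right_iff.mp hq).1.1
      have := Finset.mem_range.mp hp
      simp
      omega
  · intro p hp
    by_contra hlt
    refine hp ?_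
    have : M ≤ p := by simpa using hlt
    simp only [hin p _ this, finsum_zero]

theorem stmt7 (N : ℕ) (hN : 0 < N) :
    (Set.Finite {pq : ℕ × ℕ |
        (pq.2 < pq.1 ∧ 2 ≤ pq.2 ∧ Nat.Coprime pq.1 pq.2) ∧
        ((countK₁ pq.1 pq.2 (N : ℤ) : ℤ) - (countK₂ pq.1 pq.2 ((N : ℤ) - 1) : ℤ)) ≠ 0}) ∧
    (countRS (N : ℤ) : ℤ) - (countRS ((N : ℤ) - 1) : ℤ) =
      ∑ᶠ (p : ℕ) (q : ℕ) (_ : q < p ∧ 2 ≤ q ∧ Nat.Coprime p q),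
        ((countK₁ p q (N : ℤ) : ℤ) - (countK₂ p q ((N : ℤ) - 1) : ℤ)) := by
  have hvan : ∀ p q, q < p ∧ 2 ≤ q ∧ Nat.Coprime p q → N + 2 ≤ p →
      (countK₁ p q (N : ℤ) : ℤ) - (countK₂ p q ((N : ℤ) - 1) : ℤ) = 0 := by
    intro p q h hp
    have h1 : countK₁ p q N = 0 := card_eq_zero_of_le (lt_of_mem_relPlus hN) h hp
    have h2 : countK₂ p q ((N : ℤ) - 1) = 0 := card_eq_zero_of_le (lt_of_mem_relMinus hN) h hp
    rw [h1, h2]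
    rfl
  constructor
  · refine (coprimePairs (N + 2)).finite_toSet.subset ?_
    rintro ⟨p, q⟩ ⟨h, hne⟩
    simp only at h hne
    have hp : p < N + 2 := by
      by_contra hp
      exact hne (hvan p q h (by omega))
    simp [coprimePairs, h.1, h.2.1, hp, lt_trans h.1 hp]
    exact h.2.2
  · rw [finsum_coprimePairs hvan, Finset.sum_sub_distrib]
    have h1 : ∑ x ∈ coprimePairs (N + 2), countK₁ x.1 x.2 N = (pairSet (relPlus N)).ncard :=
      sum_card_eq_ncard ((finite_allPairs_relPlus (by omega)).subset (pairSet_subset _))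
        (lt_of_mem_relPlus hN)
    have h2 : ∑ x ∈ coprimePairs (N + 2), countK₂ x.1 x.2 ((N : ℤ) - 1) =
        (pairSet (relMinus ((N : ℤ) - 1))).ncard :=
      sum_card_eq_ncard (finite_pairSet_relMinus _) (lt_of_mem_relMinus hN)
    rw [← Nat.cast_sum, ← Nat.cast_sum, h1, h2]
    exact ncard_identity (by omega)
end

section
/- For every nonnegative integer n: ∑_{λ} ℓ(λ) = ∑_{r≥2, s≥1, rs≤n} p₂(n − rs), where the left-hand sum is over all partitions λ of n having no part equal to 1, ℓ(λ) denotes the number of parts of λ, and p₂(m) is the number of partitions of m with no part equal to 1 (with p₂(0)=1). -/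
/-!
Statement 8: for every `n ≥ 0`,
`∑_{λ ⊢ n, 1 ∉ λ} ℓ(λ) = ∑_{r ≥ 2, s ≥ 1, rs ≤ n} p₂(n − rs)`,
where `p₂(m)` is the number of partitions of `m` with no part equal to `1`.
-/

open scoped Classical

/-- `p₂ m`: the number of partitions of `m` having no part equal to `1` (`p₂ 0 = 1`). -/
noncomputable def pTwo (m : ℕ) : ℕ :=
  Nat.card {p : Nat.Partition m // 1 ∉ p.parts}

/-!
The proof is a double count. Write `m_r(λ)` for the multiplicity of `r` in `λ`. If `1 ∉ λ`, then
`ℓ(λ) = ∑_{r ≥ 2} m_r(λ)`, and `m_r(λ)` is the number of `s ≥ 1` with `s ≤ m_r(λ)`; this is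
`card_parts_eq_sum`. Exchanging the sums, it remains to count, for fixed `r ≥ 2` and `s`, the
partitions `λ` of `n` without ones such that `s ≤ m_r(λ)`. Deleting `s` copies of `r` is a
bijection from these onto the partitions of `n - rs` without ones (`removeEquiv`), and there are
none when `rs > n`; this is `card_le_count`.
-/

lemma mul_le_of_le_count {n r s : ℕ} (p : Nat.Partition n) (h : s ≤ p.parts.count r) :
    r * s ≤ n := by
  obtain ⟨t, ht⟩ := Multiset.le_iff_exists_add.1 (Multiset.le_count_iff_replicate_le.1 h)
  have hsum := p.parts_sum
  rw [ht, Multiset.sum_add, Multiset.sum_replicate, smul_eq_mul, mul_comm] at hsum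
  omega

/-- Deleting `s` copies of the part `r`, with inverse adjoining `s` copies of `r`, identifies the
partitions of `n` without ones in which `r` occurs at least `s` times with the partitions of
`n - r * s` without ones. -/
noncomputable def removeEquiv {n r s : ℕ} (hr : 2 ≤ r) (hrs : r * s ≤ n) :
    {p : Nat.Partition n // 1 ∉ p.parts ∧ s ≤ p.parts.count r} ≃
      {q : Nat.Partition (n - r * s) // 1 ∉ q.parts} where
  toFun p := ⟨{
    parts := p.1.parts - Multiset.replicate s r
    parts_pos := fun hi => p.1.parts_pos (Multiset.mem_of_le (Multiset.sub_le_self _ _) hi)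
    parts_sum := by
      have h := congrArg Multiset.sum
        (tsub_add_cancel_of_le (Multiset.le_count_iff_replicate_le.1 p.2.2))
      rw [Multiset.sum_add, Multiset.sum_replicate, smul_eq_mul, p.1.parts_sum, mul_comm] at h
      omega },
    fun h => p.2.1 (Multiset.mem_of_le (Multiset.sub_le_self _ _) h)⟩
  invFun q := ⟨{
    parts := q.1.parts + Multiset.replicate s r
    parts_pos := fun {i} hi => by
      rcases Multiset.mem_add.1 hi with h | h
      · exact q.1.parts_pos h
      · have := Multiset.eq_of_mem_replicate h
        omega
    parts_sum := by
      rw [Multiset.sum_add, Multiset.sum_replicate, smul_eq_mul, q.1.parts_sum, mul_comm s r]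
      omega },
    fun h => by
      rcases Multiset.mem_add.1 h with h | h
      · exact q.2 h
      · have := Multiset.eq_of_mem_replicate h
        omega,
    by simp⟩
  left_inv p := by
    apply Subtype.ext
    apply Nat.Partition.ext
    exact tsub_add_cancel_of_le (Multiset.le_count_iff_replicate_le.1 p.2.2)
  right_inv q := by
    apply Subtype.ext
    apply Nat.Partition.ext
    exact add_tsub_cancel_right _ _

lemma card_le_count {n r s : ℕ} (hr : 2 ≤ r) :
    (Finset.univ.filter
      (fun p : Nat.Partition n => 1 ∉ p.parts ∧ s ≤ p.parts.count r)).card =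
      if r * s ≤ n then pTwo (n - r * s) else 0 := by
  split_ifs with h
  · rw [pTwo, ← Nat.card_congr (removeEquiv hr h), Nat.card_eq_fintype_card,
      Fintype.card_subtype]
  · rw [Finset.card_eq_zero, Finset.filter_eq_empty_iff]
    exact fun p _ hp => h (mul_le_of_le_count p hp.2)

/-- The length as the number of pairs `(r, s)` with `r ≥ 2` and `1 ≤ s ≤ m_r(p)`. The bound
`s ≤ n` loses nothing, since `m_r(p) ≤ r * m_r(p) ≤ n`. -/
lemma card_parts_eq_sum {n : ℕ} (p : Nat.Partition n) (hp : 1 ∉ p.parts) :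
    p.parts.card = ∑ r ∈ Finset.Icc 2 n, ∑ s ∈ Finset.Icc 1 n,
      if s ≤ p.parts.count r then 1 else 0 := by
  have hsub : ∀ a ∈ p.parts, a ∈ Finset.Icc 2 n := fun a ha => by
    have h0 := p.parts_pos ha
    have h1 : a ≠ 1 := fun h => hp (h ▸ ha)
    have h2 := p.le_of_mem_parts ha
    rw [Finset.mem_Icc]
    omega
  rw [← Multiset.sum_count_eq_card hsub]
  refine Finset.sum_congr rfl fun r hr => ?_
  have hle : p.parts.count r ≤ n :=
    (Nat.le_mul_of_pos_left _ (by have := (Finset.mem_Icc.1 hr).1; omega)).trans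
      (mul_le_of_le_count p le_rfl)
  have hIcc : (Finset.Icc 1 n).filter (fun s => s ≤ p.parts.count r) =
      Finset.Icc 1 (p.parts.count r) := by
    ext s
    simp only [Finset.mem_filter, Finset.mem_Icc]
    omega
  rw [← Finset.card_filter, hIcc, Nat.card_Icc, Nat.add_sub_cancel]

theorem stmt8 (n : ℕ) :
    ∑ p ∈ Finset.univ.filter (fun p : Nat.Partition n => 1 ∉ p.parts), p.parts.card =
      ∑ r ∈ Finset.Icc 2 n, ∑ s ∈ Finset.Icc 1 n,
        if r * s ≤ n then pTwo (n - r * s) else 0 := by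
  rw [Finset.sum_congr rfl fun p hp => card_parts_eq_sum p (Finset.mem_filter.1 hp).2,
    Finset.sum_comm]
  refine Finset.sum_congr rfl fun r hr => ?_
  rw [Finset.sum_comm]
  refine Finset.sum_congr rfl fun s _ => ?_
  rw [← card_le_count (Finset.mem_Icc.1 hr).1, ← Finset.card_filter, Finset.filter_filter]
end

section
/- For every positive integer N the following identity of finite counts holds: f(N) − f(N−1) = ∑_{(p,q)} ( #{k ∈ ℤ∖{0} : (kp+1)(kq+1) = N} − #{k ∈ ℤ∖{0} : (kp+1)(kq−1) = N−1} ), where f(n) := #{(r,s) ∈ ℤ² : r ≥ 2, s ≥ 1, r ≡ s (mod 2), rs = n}, and the outer sum ranges over pairs of integers p > q ≥ 2 with p ≡ q (mod 2) and gcd((p−q)/2, q) = 1; the outer sum has only finitely many nonzero summands. -/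
/-!
Statement 9 (Neveu–Schwarz analogue): for every positive integer `N`,
`f(N) − f(N−1) = ∑_{(p,q)} (#{k ≠ 0 : (kp+1)(kq+1) = N} − #{k ≠ 0 : (kp+1)(kq−1) = N−1})`,
where `f(n) = #{(r,s) : r ≥ 2, s ≥ 1, r ≡ s (mod 2), rs = n}` and the outer sum ranges over
pairs of integers `p > q ≥ 2` with `p ≡ q (mod 2)` and `gcd((p−q)/2, q) = 1`;
the outer sum has only finitely many nonzero summands.
-/

/-!
The two equations have the common shape `(kp + 1)(kq + d) = n` with `d = ±1`. Put
`σ = sign k` and `(x, y) = (|k|p, |k|q)`; the equation becomes `(x + σ)(y + σd) = n`. Since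
`|k| = gcd((x - y) / 2, y)`, this map is injective, and its image consists of the pairs
`0 < y < x` of equal parity outside the *degenerate* ones, where `2y ∣ x - y`, which would
give `q = 1` (`ncard_triples_sign`). So the right-hand side is a signed count, over four sign
patterns, of nondegenerate pairs.

The degenerate pairs contribute nothing: writing `x = my`, the map `(my, y) ↦ (m(y + 1), y + 1)`
matches those of `(x + 1)(y + 1) = N` with those of `(x + 1)(y - 1) = N - 1`, and those of
`(x - 1)(y + 1) = N - 1` with those of `(x - 1)(y - 1) = N` (`ncard_degenerate`). Hence they may
be put back.

The unrestricted pairs are factorizations `rs` in which one factor is `x ± 1` and the other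
`y ± 1`. For `N` they are all factorizations counted by `f(N)` except `r = s`; for `N - 1`, all
those counted by `f(N - 1)` except `r = s + 2`. As `(c + 1)(c - 1) = c ^ 2 - 1`, the exceptional
ones are equinumerous (`ncard_factorizations_eq`).
-/

/-- `f(n)`: the number of factorizations `n = r·s` with `r ≥ 2`, `s ≥ 1`, `r ≡ s (mod 2)`. -/
noncomputable def countRSpar (n : ℤ) : ℕ :=
  Nat.card {p : ℤ × ℤ // 2 ≤ p.1 ∧ 1 ≤ p.2 ∧ p.1 % 2 = p.2 % 2 ∧ p.1 * p.2 = n}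

/-- The number of `k ∈ ℤ ∖ {0}` with `(kp+1)(kq+1) = n`. -/
noncomputable def countKone (p q : ℕ) (n : ℤ) : ℕ :=
  Nat.card {k : ℤ // k ≠ 0 ∧ (k * p + 1) * (k * q + 1) = n}

/-- The number of `k ∈ ℤ ∖ {0}` with `(kp+1)(kq−1) = n`. -/
noncomputable def countKtwo (p q : ℕ) (n : ℤ) : ℕ :=
  Nat.card {k : ℤ // k ≠ 0 ∧ (k * p + 1) * (k * q - 1) = n}

/-- The condition on the outer summation pairs: `p > q ≥ 2`, `p ≡ q (mod 2)`,
`gcd((p−q)/2, q) = 1`. -/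
def NSPair (p q : ℕ) : Prop :=
  q < p ∧ 2 ≤ q ∧ p % 2 = q % 2 ∧ Nat.Coprime ((p - q) / 2) q

/-! ### Pairs and triples -/

/-- Pairs `(x, y)` with `c ≤ y < x`, `x ≡ y (mod 2)` and `(x + s)(y + t) = n`. The four
sign choices of `(s, t)` account for the two equations and the two signs of `k`. -/
def shiftedPairs (c s t n : ℤ) : Set (ℤ × ℤ) :=
  {z | c ≤ z.2 ∧ z.2 < z.1 ∧ 2 ∣ z.1 - z.2 ∧ (z.1 + s) * (z.2 + t) = n}

/-- Pairs `(x, y)` with `2y ∣ x - y`. For `0 < y < x` of equal parity these are the pairs whose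
primitive pair `(p, q)` has `q = 1`. -/
def degenerate : Set (ℤ × ℤ) := {z | 2 * z.2 ∣ z.1 - z.2}

/-- Triples `(p, q, k)` with `(p, q)` admissible, `k ≠ 0` and `(kp + 1)(kq + d) = n`. -/
def triples (d n : ℤ) : Set ((ℕ × ℕ) × ℤ) :=
  {w | NSPair w.1.1 w.1.2 ∧ w.2 ≠ 0 ∧ (w.2 * w.1.1 + 1) * (w.2 * w.1.2 + d) = n}

theorem finite_of_mul_eq (s t n : ℤ) :
    {z : ℤ × ℤ | 1 ≤ z.1 + s ∧ 1 ≤ z.2 + t ∧ (z.1 + s) * (z.2 + t) = n}.Finite := by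
  refine ((Set.finite_Icc (1 - s) (n - s)).prod (Set.finite_Icc (1 - t) (n - t))).subset ?_
  rintro ⟨x, y⟩ ⟨h1, h2, h3⟩
  simp only [Set.mem_prod, Set.mem_Icc] at *
  refine ⟨⟨by linarith, by nlinarith⟩, by linarith, by nlinarith⟩

theorem shiftedPairs_finite {c s t : ℤ} (n : ℤ) (ht : 1 ≤ c + t) (hs : 0 ≤ c + s) :
    (shiftedPairs c s t n).Finite := by
  refine (finite_of_mul_eq s t n).subset ?_
  rintro ⟨x, y⟩ ⟨h1, h2, h3, h4⟩
  simp only [Set.mem_ofPred_eq] at *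
  exact ⟨by linarith, by linarith, h4⟩

/-! ### Triples as nondegenerate pairs -/

/-- The scaling factor is recovered as `k = gcd((x - y) / 2, y)` from `(x, y) = (kp, kq)`. -/
theorem scale_eq_gcd {p q k : ℕ} (h : NSPair p q) :
    k = Nat.gcd ((k * p - k * q) / 2) (k * q) := by
  obtain ⟨h1, h2, h3, h4⟩ := h
  obtain ⟨u, rfl⟩ : ∃ u, p = q + 2 * u := ⟨(p - q) / 2, by omega⟩
  have e1 : (q + 2 * u - q) / 2 = u := by omega
  have e2 : (k * (q + 2 * u) - k * q) / 2 = k * u := by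
    rw [← Nat.mul_sub, show q + 2 * u - q = 2 * u by omega,
      show k * (2 * u) = 2 * (k * u) by ring]
    exact Nat.mul_div_cancel_left _ two_pos
  rw [e1] at h4
  rw [e2, Nat.gcd_mul_left, h4, mul_one]

theorem exists_primitive {x y : ℕ} (hy : 0 < y) (hxy : y < x) (h2 : 2 ∣ x - y)
    (hd : ¬ 2 * y ∣ x - y) : ∃ p q k, NSPair p q ∧ 0 < k ∧ k * p = x ∧ k * q = y := by
  obtain ⟨v, hv⟩ := h2
  obtain rfl : x = y + 2 * v := by omega
  have hv0 : 0 < v := by omega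
  obtain ⟨g, u, q, hg, hc, rfl, rfl⟩ := Nat.exists_coprime' (Nat.gcd_pos_of_pos_left y hv0)
  have hu : u ≠ 0 := by rintro rfl; simp at hv0
  have hq : q ≠ 0 := by rintro rfl; simp at hy
  have hq1 : q ≠ 1 := by
    rintro rfl
    exact hd ⟨u, by rw [hv]; ring⟩
  refine ⟨q + 2 * u, q, g, ⟨by omega, by omega, by omega, ?_⟩, hg, by ring, by ring⟩
  rwa [show (q + 2 * u - q) / 2 = u by omega]

/-- The triples with `k` of sign `σ` correspond to pairs `(x, y) = (|k|p, |k|q)`. -/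
theorem ncard_triples_sign (d n σ : ℤ) (hσ : σ * σ = 1) :
    (triples d n ∩ {w | 0 < σ * w.2}).ncard =
      (shiftedPairs 1 σ (σ * d) n \ degenerate).ncard := by
  refine Set.ncard_congr (fun w _ => (σ * w.2 * w.1.1, σ * w.2 * w.1.2)) ?_ ?_ ?_
  · rintro ⟨⟨p, q⟩, k⟩ ⟨⟨⟨h1, h2, h3, h4⟩, h5, h6⟩, h7⟩
    simp only [Set.mem_ofPred_eq] at *
    have hq : (2 : ℤ) ≤ q := by exact_mod_cast h2
    obtain ⟨u, rfl⟩ : ∃ u, p = q + 2 * u := ⟨(p - q) / 2, by omega⟩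
    have hu : (0 : ℤ) < u := by omega
    rw [show (q + 2 * u - q) / 2 = u by omega] at h4
    refine ⟨⟨by nlinarith, ?_, ⟨σ * k * u, by push_cast; ring⟩, ?_⟩, ?_⟩
    · push_cast
      nlinarith [mul_pos h7 hu]
    -- `(σkp + σ)(σkq + σd) = σ²(kp + 1)(kq + d)`
    · rw [← h6]
      linear_combination ((k * ((q + 2 * u : ℕ) : ℤ) + 1) * (k * q + d)) * hσ
    -- `2σkq ∣ σk(p - q)` would give `q ∣ (p - q) / 2`, so `q = 1` by coprimality
    · rintro ⟨c, hc⟩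
      simp only at hc
      push_cast at hc
      have : (u : ℤ) = q * c := by
        have : σ * k * 2 ≠ 0 := by positivity
        apply mul_left_cancel₀ this
        linear_combination hc
      have hdvd : q ∣ u := by exact_mod_cast Dvd.intro c this.symm
      have := Nat.Coprime.eq_one_of_dvd h4.symm hdvd
      omega
  · rintro ⟨⟨p, q⟩, k⟩ ⟨⟨p', q'⟩, k'⟩ ⟨⟨h1, -, -⟩, h2⟩ ⟨⟨h1', -, -⟩, h2'⟩ h
    simp only [Set.mem_ofPred_eq, Prod.mk.injEq] at *
    obtain ⟨m, hm⟩ := Int.eq_ofNat_of_zero_le h2.le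
    obtain ⟨m', hm'⟩ := Int.eq_ofNat_of_zero_le h2'.le
    rw [hm, hm'] at h
    have ha : m * p = m' * p' := by exact_mod_cast h.1
    have hb : m * q = m' * q' := by exact_mod_cast h.2
    have hmm : m = m' := by
      have g1 := scale_eq_gcd (k := m) h1
      have g2 := scale_eq_gcd (k := m') h1'
      rw [ha, hb] at g1
      exact g1.trans g2.symm
    subst hmm
    have hm0 : 0 < m := by omega
    refine ⟨⟨Nat.eq_of_mul_eq_mul_left hm0 ha, Nat.eq_of_mul_eq_mul_left hm0 hb⟩, ?_⟩
    linear_combination σ * hm - σ * hm' - (k - k') * hσ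
  · rintro ⟨x, y⟩ ⟨⟨h1, h2, h3, h4⟩, h5⟩
    simp only [degenerate, Set.mem_ofPred_eq] at *
    lift x to ℕ using by omega
    lift y to ℕ using by omega
    have hd : ¬ 2 * y ∣ x - y := by
      intro h
      apply h5
      have := Int.natCast_dvd_natCast.mpr h
      rw [Nat.cast_sub (by omega)] at this
      exact_mod_cast this
    obtain ⟨p, q, k, hpq, hk, rfl, rfl⟩ :=
      exists_primitive (x := x) (y := y) (by omega) (by omega) (by omega) hd
    have hk' : σ * (σ * (k : ℤ)) = k := by linear_combination (k : ℤ) * hσ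
    refine ⟨⟨(p, q), σ * k⟩, ⟨⟨hpq, ?_, ?_⟩, ?_⟩, ?_⟩
    · intro h
      simp only at h
      rw [h] at hk'
      omega
    · simp only
      rw [← h4]
      push_cast
      linear_combination ((k : ℤ) * p * k * q - d) * hσ
    · simp only [Set.mem_ofPred_eq, hk']
      omega
    · simp only [hk']
      push_cast
      rfl

/-- From `|k|p - 1 ≤ |kp + 1|` and `1 ≤ |kq + d|` one gets `|k|p ≤ n + 1`, which bounds `p`,
`q < p` and `|k|`. -/
theorem triples_bound {d n : ℤ} (hd : d * d = 1) (hn : 0 ≤ n) {w : (ℕ × ℕ) × ℤ}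
    (hw : w ∈ triples d n) : (w.1.1 : ℤ) ≤ n + 1 ∧ (w.1.2 : ℤ) ≤ n + 1 ∧ |w.2| ≤ n + 1 := by
  obtain ⟨⟨p, q⟩, k⟩ := w
  obtain ⟨⟨h1, h2, -, -⟩, h5, h6⟩ := hw
  simp only at *
  have hk : 1 ≤ |k| := Int.one_le_abs h5
  have hp : (3 : ℤ) ≤ p := by omega
  have hq : (2 : ℤ) ≤ q := by omega
  have hd1 : |d| = 1 := by
    rcases mul_self_eq_one_iff.mp hd with rfl | rfl <;> simp
  have e1 : |k| * p - 1 ≤ |k * p + 1| := by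
    have := abs_sub_abs_le_abs_sub (k * p) (-1)
    rw [abs_mul, Nat.abs_cast] at this
    simpa using this
  have e2 : |k| * q - 1 ≤ |k * q + d| := by
    have := abs_sub_abs_le_abs_sub (k * q) (-d)
    rw [abs_mul, Nat.abs_cast, abs_neg, hd1, sub_neg_eq_add] at this
    exact this
  have e3 : |k * p + 1| * |k * q + d| = n := by
    rw [← abs_mul, h6, abs_of_nonneg hn]
  have e4 : 1 ≤ |k * q + d| := by nlinarith
  have e5 : |k| * p - 1 ≤ n := by nlinarith
  refine ⟨by nlinarith, by nlinarith [(by exact_mod_cast h1 : (q : ℤ) < p)], by nlinarith⟩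

theorem triples_finite {d n : ℤ} (hd : d * d = 1) (hn : 0 ≤ n) : (triples d n).Finite := by
  refine (((Set.finite_Iic (n + 1).toNat).prod (Set.finite_Iic (n + 1).toNat)).prod
    (Set.finite_Icc (-(n + 1)) (n + 1))).subset ?_
  intro w hw
  obtain ⟨h1, h2, h3⟩ := triples_bound hd hn hw
  rw [abs_le] at h3
  simp only [Set.mem_prod, Set.mem_Iic, Set.mem_Icc]
  omega

theorem ncard_triples {d n : ℤ} (hd : d * d = 1) (hn : 0 ≤ n) :
    (triples d n).ncard = (shiftedPairs 1 1 d n \ degenerate).ncard +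
      (shiftedPairs 1 (-1) (-d) n \ degenerate).ncard := by
  have h1 := ncard_triples_sign d n 1 (by norm_num)
  have h2 := ncard_triples_sign d n (-1) (by norm_num)
  rw [one_mul] at h1
  rw [neg_one_mul d] at h2
  rw [← h1, ← h2, ← Set.ncard_union_eq ?_ ?_ ?_]
  · congr 1
    ext w
    simp only [Set.mem_union, Set.mem_inter_iff, Set.mem_ofPred_eq]
    constructor
    · intro h
      rcases lt_or_gt_of_ne h.2.1 with h' | h'
      · right; exact ⟨h, by linarith⟩
      · left; exact ⟨h, by linarith⟩
    · rintro (h | h) <;> exact h.1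
  · rw [Set.disjoint_left]
    rintro w ⟨-, h⟩ ⟨-, h'⟩
    simp only [Set.mem_ofPred_eq] at h h'
    linarith
  · exact (triples_finite hd hn).subset Set.inter_subset_left
  · exact (triples_finite hd hn).subset Set.inter_subset_left

/-! ### Degenerate pairs -/

/-- For fixed odd `m = x / y` the pairs `(my, y)` and `(m(y + 1), y + 1)` satisfy
`(my + σ)(y + 1) - (m(y + 1) + σ)y = σ`, so the degenerate pairs of the two equations match. -/
theorem ncard_degenerate (σ n : ℤ) :
    (shiftedPairs 1 σ 1 n ∩ degenerate).ncard =
      (shiftedPairs 2 σ (-1) (n - σ) ∩ degenerate).ncard := by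
  have key : ∀ y j : ℤ, 0 < y → (y + 2 * y * j) / y = 1 + 2 * j := by
    intro y j hy
    rw [show y + 2 * y * j = y * (1 + 2 * j) by ring]
    exact Int.mul_ediv_cancel_left _ hy.ne'
  refine Set.ncard_congr (fun z _ => (z.1 + z.1 / z.2, z.2 + 1)) ?_ ?_ ?_
  · rintro ⟨x, y⟩ ⟨⟨h1, h2, h3, h4⟩, j, h5⟩
    simp only at *
    obtain rfl : x = y + 2 * y * j := by linarith
    rw [key y j (by linarith)]
    have hj : 0 < j := by nlinarith
    refine ⟨⟨by simp only; linarith, by simp only; nlinarith,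
      ⟨y * j + j, by simp only; ring⟩, ?_⟩, ⟨j, by simp only; ring⟩⟩
    simp only
    linear_combination h4
  · rintro ⟨x, y⟩ ⟨x', y'⟩ ⟨⟨h1, h2, h3, h4⟩, j, h5⟩ ⟨⟨h1', h2', h3', h4'⟩, j', h5'⟩ h
    simp only [Prod.mk.injEq] at *
    obtain rfl : y = y' := by linarith
    obtain rfl : x = y + 2 * y * j := by linarith
    obtain rfl : x' = y + 2 * y * j' := by linarith
    rw [key y j (by linarith), key y j' (by linarith)] at h
    have : (2 * (y + 1)) * j = (2 * (y + 1)) * j' := by linarith [h.1]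
    have := mul_left_cancel₀ (by linarith) this
    subst this
    simp
  · rintro ⟨x, y⟩ ⟨⟨h1, h2, h3, h4⟩, j, h5⟩
    simp only at *
    obtain rfl : x = y + 2 * y * j := by linarith
    obtain ⟨y, rfl⟩ : ∃ y', y = y' + 1 := ⟨y - 1, by ring⟩
    have hj : 0 < j := by nlinarith
    refine ⟨(y + 2 * y * j, y), ⟨⟨by simp only; linarith, by simp only; nlinarith,
      ⟨y * j, by simp only; ring⟩, ?_⟩, ⟨j, by simp only; ring⟩⟩, ?_⟩
    · simp only
      linear_combination h4
    · simp only
      rw [key y j (by linarith)]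
      ext <;> simp only
      ring

/-- Every pair of equal parity with `y = 1` is degenerate, so the lower bound on `y` may be
raised to `2`. This keeps `y - 1` positive, hence the set of pairs finite, when `t = -1`, even
if `n = 0`. -/
theorem shiftedPairs_diff_degenerate (s t n : ℤ) :
    shiftedPairs 1 s t n \ degenerate = shiftedPairs 2 s t n \ degenerate := by
  ext ⟨x, y⟩
  constructor
  · rintro ⟨⟨h1, h2, h3, h4⟩, h5⟩
    refine ⟨⟨?_, h2, h3, h4⟩, h5⟩
    by_contra h
    simp only at *
    obtain rfl : y = 1 := by omega
    exact h5 (by simpa [degenerate] using h3)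
  · rintro ⟨⟨h1, h2, h3, h4⟩, h5⟩
    exact ⟨⟨by linarith, h2, h3, h4⟩, h5⟩

/-! ### Factorizations with factors of equal parity -/

/-- Factorizations `n = rs` with `r ≥ 2`, `s ≥ 1` and `r ≡ s (mod 2)`. -/
def factorizations (n : ℤ) : Set (ℤ × ℤ) :=
  {z | 2 ≤ z.1 ∧ 1 ≤ z.2 ∧ z.1 % 2 = z.2 % 2 ∧ z.1 * z.2 = n}

theorem countRSpar_eq (n : ℤ) : countRSpar n = (factorizations n).ncard := rfl

theorem factorizations_finite (n : ℤ) : (factorizations n).Finite := by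
  refine (finite_of_mul_eq 0 0 n).subset ?_
  rintro ⟨x, y⟩ ⟨h1, h2, h3, h4⟩
  simp only [Set.mem_ofPred_eq, add_zero] at *
  exact ⟨by linarith, by linarith, h4⟩

/-- Splitting according to the size of `r - s`, with the single value `r - s = e` set aside. -/
theorem ncard_factorizations_split (n e : ℤ) :
    (factorizations n).ncard = (factorizations n ∩ {z | z.1 < z.2 + e}).ncard +
      (factorizations n ∩ {z | z.2 + e < z.1}).ncard +
      (factorizations n ∩ {z | z.1 = z.2 + e}).ncard := by
  have hf := factorizations_finite n
  rw [← Set.ncard_union_eq _ (hf.subset Set.inter_subset_left) (hf.subset Set.inter_subset_left),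
    ← Set.ncard_union_eq _ ((hf.subset Set.inter_subset_left).union
      (hf.subset Set.inter_subset_left)) (hf.subset Set.inter_subset_left)]
  · congr 1
    ext z
    simp only [Set.mem_union, Set.mem_inter_iff, Set.mem_ofPred_eq]
    have := lt_trichotomy z.1 (z.2 + e)
    tauto
  · rw [Set.disjoint_left]
    rintro z (⟨-, h⟩ | ⟨-, h⟩) ⟨-, h'⟩ <;> simp only [Set.mem_ofPred_eq] at h h' <;> linarith
  · rw [Set.disjoint_left]
    rintro z ⟨-, h⟩ ⟨-, h'⟩
    simp only [Set.mem_ofPred_eq] at h h'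
    linarith

/-- The smaller factor `r = y + 1` and the larger `s = x + (1 - e)`. -/
theorem ncard_factorizations_lt (n e : ℤ) (h2 : 2 ∣ e) (he : e ≤ 2) :
    (factorizations n ∩ {z | z.1 < z.2 + e}).ncard = (shiftedPairs 1 (1 - e) 1 n).ncard := by
  refine Set.ncard_congr (fun z _ => (z.2 - 1 + e, z.1 - 1)) ?_ ?_ ?_
  · rintro ⟨r, s⟩ ⟨⟨h1, h2, h3, h4⟩, h5⟩
    simp only [Set.mem_ofPred_eq] at *
    refine ⟨by simp only; omega, by simp only; omega, by simp only; omega, ?_⟩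
    simp only
    linear_combination h4
  · rintro ⟨r, s⟩ ⟨r', s'⟩ - - h
    simp only [Prod.mk.injEq] at *
    omega
  · rintro ⟨x, y⟩ ⟨h1, h2, h3, h4⟩
    simp only at *
    refine ⟨(y + 1, x + 1 - e), ⟨⟨?_, ?_, ?_, ?_⟩, ?_⟩, ?_⟩ <;>
      simp only [Set.mem_ofPred_eq, Prod.mk.injEq]
    · omega
    · omega
    · omega
    · linear_combination h4
    · omega
    · omega

/-- The larger factor `r = x + (e - 1)` and the smaller `s = y - 1`. -/
theorem ncard_factorizations_gt (n e : ℤ) (h2 : 2 ∣ e) (he : 0 ≤ e) :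
    (factorizations n ∩ {z | z.2 + e < z.1}).ncard =
      (shiftedPairs 2 (e - 1) (-1) n).ncard := by
  refine Set.ncard_congr (fun z _ => (z.1 + 1 - e, z.2 + 1)) ?_ ?_ ?_
  · rintro ⟨r, s⟩ ⟨⟨h1, h2, h3, h4⟩, h5⟩
    simp only [Set.mem_ofPred_eq] at *
    refine ⟨by simp only; omega, by simp only; omega, by simp only; omega, ?_⟩
    simp only
    linear_combination h4
  · rintro ⟨r, s⟩ ⟨r', s'⟩ - - h
    simp only [Prod.mk.injEq] at *
    omega
  · rintro ⟨x, y⟩ ⟨h1, h2, h3, h4⟩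
    simp only at *
    refine ⟨(x - 1 + e, y - 1), ⟨⟨?_, ?_, ?_, ?_⟩, ?_⟩, ?_⟩ <;>
      simp only [Set.mem_ofPred_eq, Prod.mk.injEq]
    · omega
    · omega
    · omega
    · linear_combination h4
    · omega
    · omega

/-- `n = c · c` with `c ≥ 2` corresponds to `n - 1 = (c + 1)(c - 1)`. -/
theorem ncard_factorizations_eq (n : ℤ) :
    (factorizations n ∩ {z | z.1 = z.2 + 0}).ncard =
      (factorizations (n - 1) ∩ {z | z.1 = z.2 + 2}).ncard := by
  refine Set.ncard_congr (fun z _ => (z.1 + 1, z.2 - 1)) ?_ ?_ ?_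
  · rintro ⟨r, s⟩ ⟨⟨h1, h2, h3, h4⟩, h5⟩
    simp only [Set.mem_ofPred_eq] at *
    refine ⟨⟨by simp only; omega, by simp only; omega, by simp only; omega, ?_⟩, ?_⟩
    · simp only
      linear_combination h4 - h5
    · simp only [Set.mem_ofPred_eq]
      omega
  · rintro ⟨r, s⟩ ⟨r', s'⟩ - - h
    simp only [Prod.mk.injEq] at *
    omega
  · rintro ⟨r, s⟩ ⟨⟨h1, h2, h3, h4⟩, h5⟩
    simp only [Set.mem_ofPred_eq] at *
    refine ⟨(r - 1, s + 1), ⟨⟨?_, ?_, ?_, ?_⟩, ?_⟩, ?_⟩ <;>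
      simp only [Set.mem_ofPred_eq, Prod.mk.injEq]
    · omega
    · omega
    · omega
    · linear_combination h4 + h5
    · omega
    · omega

/-! ### Comparison of the counts -/

theorem ncard_diff_degenerate {s t n : ℤ} (c : ℤ) (hc : c = 1 ∨ c = 2) (ht : 1 ≤ c + t)
    (hs : 0 ≤ c + s) :
    ((shiftedPairs 1 s t n \ degenerate).ncard : ℤ) =
      (shiftedPairs c s t n).ncard - (shiftedPairs c s t n ∩ degenerate).ncard := by
  have h := Set.ncard_inter_add_ncard_sdiff_eq_ncard (shiftedPairs c s t n) degenerate
    (shiftedPairs_finite n ht hs)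
  have e : shiftedPairs 1 s t n \ degenerate = shiftedPairs c s t n \ degenerate := by
    rcases hc with rfl | rfl
    · rfl
    · exact shiftedPairs_diff_degenerate s t n
  rw [e]
  omega

/-- The identity with the outer sum collapsed: the degenerate counts cancel in pairs, as do the
exceptional factorizations `r = s` of `N` and `r = s + 2` of `N - 1`. -/
theorem countRSpar_sub (N : ℤ) (hN : 1 ≤ N) :
    (countRSpar N : ℤ) - countRSpar (N - 1) =
      (triples 1 N).ncard - (triples (-1) (N - 1)).ncard := by
  rw [countRSpar_eq, countRSpar_eq, ncard_triples (by norm_num) (by linarith),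
    ncard_triples (by norm_num) (by linarith), ncard_factorizations_split N 0,
    ncard_factorizations_split (N - 1) 2, ncard_factorizations_eq,
    ncard_factorizations_lt N 0 (by norm_num) (by norm_num),
    ncard_factorizations_gt N 0 (by norm_num) (by norm_num),
    ncard_factorizations_lt (N - 1) 2 (by norm_num) (by norm_num),
    ncard_factorizations_gt (N - 1) 2 (by norm_num) (by norm_num)]
  push_cast
  rw [ncard_diff_degenerate 1 (by norm_num) (by norm_num) (by norm_num),
    ncard_diff_degenerate 2 (by norm_num) (by norm_num) (by norm_num),
    ncard_diff_degenerate 2 (by norm_num) (by norm_num) (by norm_num),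
    ncard_diff_degenerate 1 (by norm_num) (by norm_num) (by norm_num)]
  have d1 := ncard_degenerate 1 N
  have d2 := ncard_degenerate (-1) (N - 1)
  norm_num at d1 d2 ⊢
  rw [d1, d2]
  ring

/-! ### Summation over the pairs -/

/-- The triples over a fixed pair `(p, q)`. -/
def fibre (d n : ℤ) (pq : ℕ × ℕ) : Set ℤ := {k | (pq, k) ∈ triples d n}

theorem ncard_triples_eq_finsum {d n : ℤ} (hd : d * d = 1) (hn : 0 ≤ n) :
    {pq | ((fibre d n pq).ncard : ℤ) ≠ 0}.Finite ∧
      ((triples d n).ncard : ℤ) = ∑ᶠ pq, ((fibre d n pq).ncard : ℤ) := by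
  classical
  have hf := triples_finite hd hn
  have hsub : {pq | ((fibre d n pq).ncard : ℤ) ≠ 0} ⊆ hf.toFinset.image Prod.fst := by
    intro pq h
    simp only [Set.mem_ofPred_eq, Nat.cast_ne_zero] at h
    obtain ⟨k, hk⟩ := Set.nonempty_of_ncard_ne_zero h
    simp only [Finset.coe_image, Set.mem_image, Finset.mem_coe, Set.Finite.mem_toFinset]
    exact ⟨(pq, k), hk, rfl⟩
  refine ⟨(Finset.finite_toSet _).subset hsub, ?_⟩
  rw [finsum_eq_sum_of_support_subset _ hsub, Set.ncard_eq_toFinset_card _ hf,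
    Finset.card_eq_sum_card_image Prod.fst]
  push_cast
  refine Finset.sum_congr rfl fun pq _ => ?_
  rw [← Set.ncard_coe_finset]
  congr 1
  refine Set.ncard_congr (fun w _ => w.2) ?_ ?_ ?_
  · rintro ⟨pq', k⟩ h
    simp only [Finset.coe_filter, Set.Finite.mem_toFinset, Set.mem_ofPred_eq] at h
    obtain ⟨h, rfl⟩ := h
    exact h
  · rintro ⟨a, k⟩ ⟨b, l⟩ h h' e
    simp only [Finset.coe_filter, Set.Finite.mem_toFinset, Set.mem_ofPred_eq] at h h' e
    rw [h.2, h'.2, e]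
  · intro k hk
    refine ⟨(pq, k), ?_, rfl⟩
    simp only [Finset.coe_filter, Set.Finite.mem_toFinset, Set.mem_ofPred_eq, and_true]
    exact hk

theorem ncard_fibre_one {p q : ℕ} (h : NSPair p q) (n : ℤ) :
    (fibre 1 n (p, q)).ncard = countKone p q n := by
  rw [countKone, ← Set.coe_ofPred, Nat.card_coe_set_eq]
  simp [fibre, triples, h]

theorem ncard_fibre_neg_one {p q : ℕ} (h : NSPair p q) (n : ℤ) :
    (fibre (-1) n (p, q)).ncard = countKtwo p q n := by
  rw [countKtwo, ← Set.coe_ofPred, Nat.card_coe_set_eq]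
  simp [fibre, triples, h, sub_eq_add_neg]

theorem ncard_fibre_of_not {p q : ℕ} (h : ¬ NSPair p q) (d n : ℤ) :
    (fibre d n (p, q)).ncard = 0 := by
  simp [fibre, triples, h]

theorem stmt9 (N : ℕ) (hN : 0 < N) :
    (Set.Finite {pq : ℕ × ℕ | NSPair pq.1 pq.2 ∧
        ((countKone pq.1 pq.2 (N : ℤ) : ℤ) - (countKtwo pq.1 pq.2 ((N : ℤ) - 1) : ℤ)) ≠ 0}) ∧
    (countRSpar (N : ℤ) : ℤ) - (countRSpar ((N : ℤ) - 1) : ℤ) =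
      ∑ᶠ (p : ℕ) (q : ℕ) (_ : NSPair p q),
        ((countKone p q (N : ℤ) : ℤ) - (countKtwo p q ((N : ℤ) - 1) : ℤ)) := by
  obtain ⟨f1, s1⟩ := ncard_triples_eq_finsum (d := 1) (n := N) (by norm_num) (by omega)
  obtain ⟨f2, s2⟩ := ncard_triples_eq_finsum (d := -1) (n := N - 1) (by norm_num) (by omega)
  have hfin : {pq | ((fibre 1 N pq).ncard : ℤ) - (fibre (-1) (N - 1) pq).ncard ≠ 0}.Finite := by
    refine (f1.union f2).subset fun pq h => ?_
    simp only [Set.mem_union, Set.mem_ofPred_eq] at *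
    omega
  constructor
  · refine hfin.subset ?_
    rintro ⟨p, q⟩ ⟨h, h'⟩
    simpa only [Set.mem_ofPred_eq, ncard_fibre_one h, ncard_fibre_neg_one h] using h'
  · rw [countRSpar_sub N (by omega), s1, s2, ← finsum_sub_distrib f1 f2, finsum_curry _ hfin]
    refine finsum_congr fun p => finsum_congr fun q => ?_
    by_cases h : NSPair p q
    · simp [h, ncard_fibre_one h, ncard_fibre_neg_one h]
    · simp [h, ncard_fibre_of_not h]
end

section
/- For every nonnegative integer M: D(M) = ∑_{r≥2, s≥1, r≡s (mod 2), rs≤M} q₃(M − rs), where D(M) := ∑_{μ} ℓ(μ), the sum over all multisets μ of integers ≥ 3 whose odd elements are pairwise distinct and whose elements sum to M, ℓ(μ) being the number of elements of μ; and q₃(m) is the number of multisets of integers ≥ 3 with pairwise distinct odd elements summing to m (q₃(0)=1). (This is the Neveu–Schwarz analogue, in the doubled variable y = x^{1/2}, of the Virasoro partition identity; multisets of half-integers ≥ 3/2 with distinct non-integer parts correspond, after doubling, to multisets of integers ≥ 3 with distinct odd parts.) -/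
/-!
Write `q = qThree`. Counting `D(M)` by part size, `D(M) = ∑_{j ≥ 3} occ j M`, where `occ j M` is the
total multiplicity of `j`. Deleting one copy of `j` gives (`occ_rec`)
`occ j M = q (M - j) + (-1) ^ j * occ j (M - j)`: an even part may be repeated freely, whereas for
an odd part the multisets still containing `j` have to be discarded. Iterating,
`occ j M = ∑_{k ≥ 1} (-1) ^ (j (k - 1)) q (M - j k)` (`occ_eq_range`, `occ_eq_sum_dvd`).

Collecting the terms with `j k = n`, respectively `r s = n`, the claim reduces to an equality of the
coefficients of `q (M - n)`, which is `divisor_identity`: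
`∑_{j ∣ n, j ≥ 3} (-1) ^ (j (n / j - 1)) = #{r ∣ n : r ≥ 2, r ≡ n / r mod 2}`.
For odd `n` both sides count the divisors other than `1`. For even `n` the left side is the number
of even divisors minus the number of odd ones (the omitted `1` and `2` cancel); the involution
`d ↦ n / d` turns the odd divisors into the even divisors with odd cofactor, leaving the even
divisors with even cofactor.
-/

/-!
Statement 10 (Neveu–Schwarz partition identity, doubled variable): for every `M ≥ 0`,
`D(M) = ∑_{r ≥ 2, s ≥ 1, r ≡ s (mod 2), rs ≤ M} q₃(M − rs)`,
where `D(M) = ∑_μ ℓ(μ)`, the sum over all multisets `μ` of integers `≥ 3` with pairwise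
distinct odd elements summing to `M`, and `q₃(m)` is the number of such multisets summing
to `m`.
-/

/-- A finite multiset of integers, each at least `3`, in which every odd integer occurs
at most once. -/
def GoodNS (m : Multiset ℕ) : Prop :=
  (∀ j ∈ m, 3 ≤ j) ∧ ∀ j ∈ m, Odd j → m.count j ≤ 1

/-- `q₃ m`: the number of multisets of integers `≥ 3` with pairwise distinct odd elements
summing to `m` (`q₃ 0 = 1`). -/
noncomputable def qThree (m : ℕ) : ℕ :=
  Nat.card {s : Multiset ℕ // GoodNS s ∧ s.sum = m}

/-- The summands of a good multiset are positive, so it is a partition of its sum. -/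
lemma goodNS_finite (M : ℕ) : ({s : Multiset ℕ | GoodNS s ∧ s.sum = M}).Finite := by
  refine (Set.finite_range (fun p : Nat.Partition M => p.parts)).subset ?_
  rintro s ⟨hs, hM⟩
  exact ⟨⟨s, fun {i} hi => by have := hs.1 i hi; omega, hM⟩, rfl⟩

/-- The finite set of good multisets with sum `M`. -/
noncomputable def goodSet (M : ℕ) : Finset (Multiset ℕ) := (goodNS_finite M).toFinset

lemma mem_goodSet {M : ℕ} {s : Multiset ℕ} : s ∈ goodSet M ↔ GoodNS s ∧ s.sum = M := by
  simp [goodSet]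

lemma qThree_eq (M : ℕ) : qThree M = (goodSet M).card := by
  unfold qThree goodSet
  exact Nat.card_eq_card_finite_toFinset (goodNS_finite M)

/-- The total number of occurrences of the part `j` in all good multisets with sum `M`. -/
noncomputable def occ (j M : ℕ) : ℕ := ∑ s ∈ goodSet M, s.count j

lemma sum_card_eq (M : ℕ) :
    ∑ s ∈ goodSet M, s.card = ∑ j ∈ Finset.Icc 3 M, occ j M := by
  unfold occ
  rw [Finset.sum_comm]
  refine Finset.sum_congr rfl fun s hs => ?_
  obtain ⟨hg, hM⟩ := mem_goodSet.1 hs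
  refine (Multiset.sum_count_eq_card fun a ha => ?_).symm
  rw [Finset.mem_Icc]
  exact ⟨hg.1 a ha, hM ▸ Multiset.le_sum_of_mem ha⟩

lemma occ_of_lt {j M : ℕ} (h : M < j) : occ j M = 0 := by
  refine Finset.sum_eq_zero fun s hs => ?_
  obtain ⟨-, hM⟩ := mem_goodSet.1 hs
  rw [Multiset.count_eq_zero]
  intro hj
  have := Multiset.le_sum_of_mem hj
  omega

lemma GoodNS.of_cons {j : ℕ} {s : Multiset ℕ} (h : GoodNS (j ::ₘ s)) : GoodNS s :=
  ⟨fun i hi => h.1 i (Multiset.mem_cons_of_mem hi), fun i hi ho =>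
    (Multiset.count_le_count_cons i j s).trans (h.2 i (Multiset.mem_cons_of_mem hi) ho)⟩

lemma goodNS_cons_iff {j : ℕ} (hj : 3 ≤ j) {s : Multiset ℕ} :
    GoodNS (j ::ₘ s) ↔ GoodNS s ∧ (Odd j → j ∉ s) := by
  constructor
  · intro h
    refine ⟨h.of_cons, fun ho hjs => ?_⟩
    have h1 := h.2 j (Multiset.mem_cons_self j s) ho
    rw [Multiset.count_cons_self] at h1
    have := Multiset.count_pos.2 hjs
    omega
  · rintro ⟨h, ho⟩
    refine ⟨fun i hi => ?_, fun i hi hio => ?_⟩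
    · rcases Multiset.mem_cons.1 hi with rfl | hi
      · exact hj
      · exact h.1 i hi
    · by_cases hij : i = j
      · subst hij
        simp [Multiset.count_eq_zero.2 (ho hio)]
      · rw [Multiset.count_cons_of_ne hij]
        rcases Multiset.mem_cons.1 hi with rfl | hi
        · exact absurd rfl hij
        · exact h.2 i hi hio

/-- Deleting one copy of `j` from the multisets that contain it. -/
lemma occ_eq_sum {j M : ℕ} (hj : 3 ≤ j) (h : j ≤ M) :
    occ j M = ∑ s ∈ goodSet (M - j) with (Odd j → j ∉ s), (s.count j + 1) := by
  have h1 : occ j M = ∑ s ∈ goodSet M with j ∈ s, s.count j := by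
    rw [occ, Finset.sum_filter_of_ne]
    intro s _ hne
    by_contra hc
    exact hne (Multiset.count_eq_zero.2 hc)
  rw [h1]
  symm
  refine Finset.sum_bij' (fun s _ => j ::ₘ s) (fun s _ => s.erase j) ?_ ?_ ?_ ?_ ?_
  · intro s hs
    obtain ⟨hs, ho⟩ := Finset.mem_filter.1 hs
    obtain ⟨hg, hM⟩ := mem_goodSet.1 hs
    refine Finset.mem_filter.2 ⟨mem_goodSet.2 ⟨(goodNS_cons_iff hj).2 ⟨hg, ho⟩, ?_⟩, by simp⟩
    rw [Multiset.sum_cons, hM]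
    omega
  · intro s hs
    obtain ⟨hs, hjs⟩ := Finset.mem_filter.1 hs
    obtain ⟨t, rfl⟩ := Multiset.exists_cons_of_mem hjs
    obtain ⟨hg, hM⟩ := mem_goodSet.1 hs
    obtain ⟨hg, ho⟩ := (goodNS_cons_iff hj).1 hg
    rw [Multiset.sum_cons] at hM
    rw [Multiset.erase_cons_head]
    exact Finset.mem_filter.2 ⟨mem_goodSet.2 ⟨hg, by omega⟩, ho⟩
  · intro s _
    exact Multiset.erase_cons_head j s
  · intro s hs
    exact Multiset.cons_erase (Finset.mem_filter.1 hs).2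
  · intro s _
    exact (Multiset.count_cons_self j s).symm

/-- For odd `j` the multisets of sum `M - j` that already contain `j` (exactly once) must be
discarded; for even `j` every one is allowed and contributes its own copies of `j` as well. -/
lemma occ_rec {j M : ℕ} (hj : 3 ≤ j) (h : j ≤ M) :
    (occ j M : ℤ) = qThree (M - j) + (-1) ^ j * occ j (M - j) := by
  rw [occ_eq_sum hj h, qThree_eq, occ, Finset.sum_filter, Finset.card_eq_sum_ones]
  push_cast
  rw [Finset.mul_sum, ← Finset.sum_add_distrib]
  refine Finset.sum_congr rfl fun s hs => ?_
  obtain ⟨hg, -⟩ := mem_goodSet.1 hs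
  rcases Nat.even_or_odd j with he | ho
  · simp [he.neg_one_pow, Nat.not_odd_iff_even.2 he, add_comm]
  · by_cases hjs : j ∈ s
    · have h1 : s.count j = 1 := le_antisymm (hg.2 j hjs ho) (Multiset.count_pos.2 hjs)
      simp [ho, ho.neg_one_pow, hjs, h1]
    · simp [hjs]

lemma occ_eq_range {j : ℕ} (hj : 3 ≤ j) (M : ℕ) :
    (occ j M : ℤ) =
      ∑ k ∈ Finset.range (M / j), (-1) ^ (j * k) * (qThree (M - j * (k + 1)) : ℤ) := by
  induction M using Nat.strong_induction_on with
  | _ M ih =>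
    rcases lt_or_ge M j with h | h
    · simp [occ_of_lt h, Nat.div_eq_of_lt h]
    · rw [occ_rec hj h, ih (M - j) (by omega), Nat.div_eq_sub_div (by omega) h,
        Finset.sum_range_succ', Finset.mul_sum, add_comm]
      congr 1
      · refine Finset.sum_congr rfl fun k _ => ?_
        have e1 : j + j * k = j * (k + 1) := by ring
        have e2 : j + j * (k + 1) = j * (k + 1 + 1) := by ring
        rw [← mul_assoc, ← pow_add, Nat.sub_sub, e1, e2]
      · simp

/-- Reindexing a sum over multiples `j * s ≤ M` by the value of the multiple. -/
lemma sum_multiples {j : ℕ} (hj : 0 < j) (M : ℕ) (f : ℕ → ℕ → ℤ) :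
    ∑ s ∈ Finset.Icc 1 M, (if j * s ≤ M then f s (j * s) else 0) =
      ∑ n ∈ Finset.Icc 1 M, if j ∣ n then f (n / j) n else 0 := by
  rw [← Finset.sum_filter, ← Finset.sum_filter]
  refine Finset.sum_bij' (fun s _ => j * s) (fun n _ => n / j) ?_ ?_ ?_ ?_ ?_
  · intro s hs
    simp only [Finset.mem_filter, Finset.mem_Icc] at hs ⊢
    exact ⟨⟨Nat.mul_pos hj hs.1.1, hs.2⟩, dvd_mul_right j s⟩
  · intro n hn
    simp only [Finset.mem_filter, Finset.mem_Icc] at hn ⊢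
    exact ⟨⟨Nat.div_pos (Nat.le_of_dvd hn.1.1 hn.2) hj, (Nat.div_le_self n j).trans hn.1.2⟩,
      by rw [Nat.mul_div_cancel' hn.2]; exact hn.1.2⟩
  · intro s _
    exact Nat.mul_div_cancel_left s hj
  · intro n hn
    exact Nat.mul_div_cancel' (Finset.mem_filter.1 hn).2
  · intro s _
    simp only [Nat.mul_div_cancel_left s hj]

lemma occ_eq_sum_dvd {j : ℕ} (hj : 3 ≤ j) (M : ℕ) :
    (occ j M : ℤ) = ∑ n ∈ Finset.Icc 1 M,
      if j ∣ n then (-1) ^ (j * (n / j - 1)) * (qThree (M - n) : ℤ) else 0 := by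
  rw [← sum_multiples (by omega) M (fun k n => (-1) ^ (j * (k - 1)) * (qThree (M - n) : ℤ)),
    occ_eq_range hj, ← Finset.sum_filter]
  refine Finset.sum_bij' (fun k _ => k + 1) (fun s _ => s - 1) ?_ ?_ ?_ ?_ ?_
  · intro k hk
    rw [Finset.mem_range, Nat.lt_iff_add_one_le, Nat.le_div_iff_mul_le (by omega)] at hk
    simp only [Finset.mem_filter, Finset.mem_Icc]
    have : k + 1 ≤ (k + 1) * j := Nat.le_mul_of_pos_right _ (by omega)
    exact ⟨⟨by omega, by omega⟩, by rwa [mul_comm]⟩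
  · intro s hs
    simp only [Finset.mem_filter, Finset.mem_Icc] at hs
    rw [Finset.mem_range, Nat.lt_iff_add_one_le, Nat.le_div_iff_mul_le (by omega),
      Nat.sub_add_cancel hs.1.1, mul_comm]
    exact hs.2
  · intro k _
    rfl
  · intro s hs
    simp only [Finset.mem_filter, Finset.mem_Icc] at hs
    exact Nat.sub_add_cancel hs.1.1
  · intro k _
    rfl

/-- The sums over `[a, M]` of the divisors of `n ≤ M` are sums over `n.divisors`. -/
lemma sum_Icc_dvd {a n M : ℕ} (hn : n ∈ Finset.Icc 1 M) (f : ℕ → ℤ) :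
    ∑ j ∈ Finset.Icc a M, (if j ∣ n then f j else 0) =
      ∑ j ∈ n.divisors, if a ≤ j then f j else 0 := by
  rw [← Finset.sum_filter, ← Finset.sum_filter]
  refine Finset.sum_congr ?_ fun _ _ => rfl
  ext j
  rw [Finset.mem_Icc] at hn
  simp only [Finset.mem_filter, Finset.mem_Icc, Nat.mem_divisors]
  constructor
  · rintro ⟨h1, h2⟩
    exact ⟨⟨h2, by omega⟩, h1.1⟩
  · rintro ⟨⟨h1, _⟩, h3⟩
    exact ⟨⟨h3, (Nat.le_of_dvd (by omega) h1).trans hn.2⟩, h1⟩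

/-- The divisor identity that carries the theorem. For even `n`, the divisors `1` and `2` excluded
on the left have opposite signs, and `d ↦ n / d` exchanges the odd divisors with the divisors
whose cofactor is odd. -/
lemma divisor_identity {n : ℕ} (hn : 0 < n) :
    ∑ j ∈ n.divisors, (if 3 ≤ j then (-1 : ℤ) ^ (j * (n / j - 1)) else 0) =
      ∑ r ∈ n.divisors, if 2 ≤ r then (if r % 2 = n / r % 2 then 1 else 0) else 0 := by
  rcases Nat.even_or_odd n with he | ho
  · have h2 : 2 ∣ n := he.two_dvd
    -- Replace the left side by the full signed sum over all divisors.
    have hL : ∑ j ∈ n.divisors, (if 3 ≤ j then (-1 : ℤ) ^ (j * (n / j - 1)) else 0) =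
        ∑ j ∈ n.divisors, ((if j % 2 = 0 then (1 : ℤ) else -1)
          + ((if j = 1 then 1 else 0) - (if j = 2 then 1 else 0))) := by
      refine Finset.sum_congr rfl fun j hj => ?_
      have hjn := Nat.dvd_of_mem_divisors hj
      have hpos : 0 < j := Nat.pos_of_mem_divisors hj
      by_cases h3 : 3 ≤ j
      · rw [if_pos h3, if_neg (by omega : ¬ j = 1), if_neg (by omega : ¬ j = 2)]
        rcases Nat.even_or_odd j with hje | hjo
        · rw [(hje.mul_right _).neg_one_pow, if_pos (Nat.even_iff.1 hje)]; ring
        · have hq : Even (n / j) := by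
            have := Nat.mul_div_cancel' hjn
            rw [← this, Nat.even_mul] at he
            exact he.resolve_left (Nat.not_even_iff_odd.2 hjo)
          have hqp : 0 < n / j := Nat.div_pos (Nat.le_of_dvd hn hjn) hpos
          have hq' : Odd (n / j - 1) := Nat.Even.sub_odd hqp hq odd_one
          rw [(hjo.mul hq').neg_one_pow, if_neg (by rw [Nat.odd_iff.1 hjo]; omega)]; ring
      · have : j = 1 ∨ j = 2 := by omega
        rcases this with rfl | rfl <;> simp
    have hcancel : ∑ j ∈ n.divisors, ((if j = 1 then (1 : ℤ) else 0) - (if j = 2 then 1 else 0))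
        = 0 := by
      rw [Finset.sum_sub_distrib]
      simp [hn.ne', h2]
    have hswap := Nat.sum_div_divisors n (fun d => if d % 2 = 0 then (0 : ℤ) else 1)
    suffices key : ∑ j ∈ n.divisors, (if j % 2 = 0 then (1 : ℤ) else -1) =
        ∑ r ∈ n.divisors, (if 2 ≤ r then (if r % 2 = n / r % 2 then (1 : ℤ) else 0) else 0) +
        (∑ d ∈ n.divisors, (if n / d % 2 = 0 then (0 : ℤ) else 1) -
          ∑ d ∈ n.divisors, (if d % 2 = 0 then (0 : ℤ) else 1)) by
      rw [hL, Finset.sum_add_distrib, hcancel, add_zero, key, hswap, sub_self, add_zero]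
    rw [← Finset.sum_sub_distrib, ← Finset.sum_add_distrib]
    refine Finset.sum_congr rfl fun j hj => ?_
    have hjn := Nat.dvd_of_mem_divisors hj
    have hpos : 0 < j := Nat.pos_of_mem_divisors hj
    have hpar : j % 2 = 0 ∨ n / j % 2 = 0 := by
      rw [← Nat.mul_div_cancel' hjn, Nat.even_mul] at he
      simpa only [Nat.even_iff] using he
    have hone : j = 1 → n / j % 2 = 0 := fun h => by omega
    split_ifs <;> omega
  · refine Finset.sum_congr rfl fun j hj => ?_
    have hjn := Nat.dvd_of_mem_divisors hj
    rw [← Nat.mul_div_cancel' hjn, Nat.odd_mul] at ho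
    have hq : Even (n / j - 1) := Nat.Odd.sub_odd ho.2 odd_one
    have h1 := Nat.odd_iff.1 ho.1
    have h2 := Nat.odd_iff.1 ho.2
    rw [(hq.mul_left _).neg_one_pow, h1, h2, if_pos rfl]
    by_cases h3 : 3 ≤ j
    · rw [if_pos h3, if_pos (by omega)]
    · rw [if_neg h3, if_neg (by omega)]

theorem stmt10 (M : ℕ) :
    ({s : Multiset ℕ | GoodNS s ∧ s.sum = M}).Finite ∧
    (∑ᶠ s : {s : Multiset ℕ // GoodNS s ∧ s.sum = M}, (s : Multiset ℕ).card) =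
      ∑ r ∈ Finset.Icc 2 M, ∑ s ∈ Finset.Icc 1 M,
        if r % 2 = s % 2 ∧ r * s ≤ M then qThree (M - r * s) else 0 := by
  refine ⟨goodNS_finite M, ?_⟩
  have hD : (∑ᶠ s : {s : Multiset ℕ // GoodNS s ∧ s.sum = M}, (s : Multiset ℕ).card) =
      ∑ s ∈ goodSet M, s.card := by
    have h1 := finsum_set_coe_eq_finsum_mem (f := fun s : Multiset ℕ => s.card)
      {s : Multiset ℕ | GoodNS s ∧ s.sum = M}
    exact h1.trans (finsum_mem_eq_finite_toFinset_sum _ (goodNS_finite M))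
  rw [hD, sum_card_eq]
  rw [← Nat.cast_inj (R := ℤ)]
  -- Both sides become sums over `n ∈ [1, M]` of `qThree (M - n)` times a divisor sum.
  have hL : ∑ j ∈ Finset.Icc 3 M, (occ j M : ℤ) = ∑ n ∈ Finset.Icc 1 M,
      (∑ j ∈ n.divisors, (if 3 ≤ j then (-1 : ℤ) ^ (j * (n / j - 1)) else 0))
        * (qThree (M - n) : ℤ) := by
    rw [Finset.sum_congr rfl fun j hj => occ_eq_sum_dvd (Finset.mem_Icc.1 hj).1 M,
      Finset.sum_comm]
    refine Finset.sum_congr rfl fun n hn => ?_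
    rw [sum_Icc_dvd hn, Finset.sum_mul]
    simp only [ite_mul, zero_mul]
  have hR : ∑ r ∈ Finset.Icc 2 M, ∑ s ∈ Finset.Icc 1 M,
      (if r % 2 = s % 2 ∧ r * s ≤ M then (qThree (M - r * s) : ℤ) else 0) =
      ∑ n ∈ Finset.Icc 1 M,
      (∑ r ∈ n.divisors, if 2 ≤ r then (if r % 2 = n / r % 2 then (1 : ℤ) else 0) else 0)
        * (qThree (M - n) : ℤ) := by
    have h1 : ∀ r ∈ Finset.Icc 2 M, ∑ s ∈ Finset.Icc 1 M,
        (if r % 2 = s % 2 ∧ r * s ≤ M then (qThree (M - r * s) : ℤ) else 0) =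
        ∑ n ∈ Finset.Icc 1 M, if r ∣ n then
          (if r % 2 = n / r % 2 then (qThree (M - n) : ℤ) else 0) else 0 := by
      intro r hr
      rw [Finset.mem_Icc] at hr
      rw [← sum_multiples (by omega) M
        (fun s n => if r % 2 = s % 2 then (qThree (M - n) : ℤ) else 0)]
      refine Finset.sum_congr rfl fun s _ => ?_
      split_ifs <;> first | rfl | tauto
    rw [Finset.sum_congr rfl h1, Finset.sum_comm]
    refine Finset.sum_congr rfl fun n hn => ?_
    rw [sum_Icc_dvd hn, Finset.sum_mul]
    simp only [ite_mul, zero_mul, one_mul]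
  push_cast
  rw [hL, hR]
  refine Finset.sum_congr rfl fun n hn => ?_
  rw [divisor_identity (Finset.mem_Icc.1 hn).1]
end

section
/- Let Q be a free abelian group with a group homomorphism ht: Q → ℤ, let (b_i)_{i∈B} be a finite family of elements of Q with ht(b_i) > 0 for all i ∈ B, and let ε: B → {0,1} be a parity function. For ν ∈ Q call a function m: B → ℤ≥0 a partition of ν if m(i) ≤ 1 whenever ε(i) = 1 and ∑_{i∈B} m(i)·b_i = ν; let P(ν) be the (finite) set of partitions of ν and K(ν) := |P(ν)|. Then for every ν ∈ Q and every i ∈ B: ∑_{m ∈ P(ν)} m(i) = ∑_{r=1}^∞ (−1)^{(r−1)ε(i)} K(ν − r·b_i), where the right-hand sum has only finitely many nonzero terms. -/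
/-!
Statement 13: abstract partition-function identity.  Let `Q` be a free abelian group with a
height homomorphism `ht : Q → ℤ`, `(b i)_{i ∈ B}` a finite family of elements of positive
height, and `ε : B → Bool` a parity function.  For a "partition" `m : B → ℕ` of `ν`
(where `m i ≤ 1` whenever `ε i` is odd and `∑ m i • b i = ν`), we have for each `i`:
`∑_{m ∈ P(ν)} m i = ∑_{r ≥ 1} (−1)^{(r−1)ε(i)} K(ν − r • b i)`,
with only finitely many nonzero terms on the right.
-/

/-- The set of partitions of `ν` into the parts `b i`, odd parts occurring at most once. -/
def PartSet {Q : Type} [AddCommGroup Q] {B : Type} [Fintype B]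
    (b : B → Q) (ε : B → Bool) (ν : Q) : Set (B → ℕ) :=
  {m | (∀ j, ε j = true → m j ≤ 1) ∧ ∑ j, m j • b j = ν}

/-- `K ν`: the number of partitions of `ν`. -/
noncomputable def KPart {Q : Type} [AddCommGroup Q] {B : Type} [Fintype B]
    (b : B → Q) (ε : B → Bool) (ν : Q) : ℕ :=
  Nat.card (PartSet b ε ν)

/-!
Write `b = b i`, `s = -1` if `i` is odd and `s = 1` otherwise, and `T ν = ∑_{m ∈ P(ν)} m i`.
Removing one copy of the part `b` maps the partitions `m` of `ν` with `m i ≠ 0` injectively to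
partitions `m'` of `ν - b`, and `m i = 1 + s * m' i`: for even `i` this is `m i = m' i + 1`, and
for odd `i` it reads `1 = 1 - 0`.  The image consists of the `m'` with `1 + s * m' i ≠ 0`
(everything for even `i`, the `m'` with `m' i = 0` for odd `i`), so summing gives
`T ν = K (ν - b) + s * T (ν - b)` (`partSum_rec`).  Iterating (`partSum_iterate`) gives
`T ν = ∑_{r=1}^n s^(r-1) K (ν - r b) + s^n T (ν - n b)`.  Heights of the parts are positive, so
`ν - n b` has negative height and hence no partitions once `n > ht ν`.
-/

/-- Every multiplicity in a partition of `ν` is at most the height of `ν`. -/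
theorem partSet_le {Q : Type} [AddCommGroup Q] (ht : Q →+ ℤ) {B : Type} [Fintype B] {b : B → Q}
    (hb : ∀ i, 0 < ht (b i)) {ε : B → Bool} {ν : Q} {m : B → ℕ} (hm : m ∈ PartSet b ε ν) (j : B) :
    (m j : ℤ) ≤ ht ν := by
  have h : ht ν = ∑ k, (m k : ℤ) * ht (b k) := by
    rw [← hm.2, map_sum]
    simp
  have h1 : (m j : ℤ) * ht (b j) ≤ ∑ k, (m k : ℤ) * ht (b k) :=
    Finset.single_le_sum (f := fun k => (m k : ℤ) * ht (b k))
      (fun k _ => mul_nonneg (by positivity) (hb k).le) (Finset.mem_univ j)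
  have := hb j
  nlinarith

theorem partSet_finite {Q : Type} [AddCommGroup Q] (ht : Q →+ ℤ) {B : Type} [Fintype B]
    {b : B → Q} (hb : ∀ i, 0 < ht (b i)) (ε : B → Bool) (ν : Q) : (PartSet b ε ν).Finite := by
  refine (Set.Finite.pi' (fun _ : B => Set.finite_Iic (ht ν).toNat)).subset fun m hm j => ?_
  have := partSet_le ht hb hm j
  simp only [Set.mem_Iic]
  omega

theorem partSet_eq_empty {Q : Type} [AddCommGroup Q] (ht : Q →+ ℤ) {B : Type} [Fintype B]
    {b : B → Q} (hb : ∀ i, 0 < ht (b i)) (ε : B → Bool) (i : B) {ν : Q} (hν : ht ν < 0) :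
    PartSet b ε ν = ∅ := by
  refine Set.eq_empty_of_forall_notMem fun m hm => ?_
  have := partSet_le ht hb hm i
  omega

theorem partSet_sub_eq_empty {Q : Type} [AddCommGroup Q] (ht : Q →+ ℤ) {B : Type} [Fintype B]
    {b : B → Q} (hb : ∀ i, 0 < ht (b i)) (ε : B → Bool) (i : B) {ν : Q} {n : ℕ}
    (hn : ht ν < n) : PartSet b ε (ν - n • b i) = ∅ := by
  refine partSet_eq_empty ht hb ε i ?_
  have := hb i
  rw [map_sub, map_nsmul, nsmul_eq_mul]
  nlinarith

/-- The total multiplicity of the part `b i` over all partitions of `ν`. -/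
noncomputable def partSum {Q : Type} [AddCommGroup Q] {B : Type} [Fintype B]
    (b : B → Q) (ε : B → Bool) (i : B) (ν : Q) : ℤ :=
  ∑ᶠ m ∈ PartSet b ε ν, (m i : ℤ)

/-- The sign `(-1) ^ ε i`. -/
def partSign {B : Type} (ε : B → Bool) (i : B) : ℤ := if ε i then -1 else 1

theorem sum_add_single {Q : Type} [AddCommGroup Q] {B : Type} [Fintype B] [DecidableEq B]
    (b : B → Q) (m : B → ℕ) (i : B) :
    ∑ j, (m + Pi.single i 1 : B → ℕ) j • b j = ∑ j, m j • b j + b i := by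
  simp [add_smul, Finset.sum_add_distrib, Pi.single_apply, ite_smul]

theorem partSum_rec {Q : Type} [AddCommGroup Q] (ht : Q →+ ℤ) {B : Type} [Fintype B]
    {b : B → Q} (hb : ∀ i, 0 < ht (b i)) (ε : B → Bool) (i : B) (ν : Q) :
    partSum b ε i ν = KPart b ε (ν - b i) + partSign ε i * partSum b ε i (ν - b i) := by
  classical
  have hf := partSet_finite ht hb ε
  have hK : (KPart b ε (ν - b i) : ℤ) = ∑ m ∈ (hf (ν - b i)).toFinset, 1 := by
    rw [KPart, Nat.card_coe_set_eq, Set.ncard_eq_toFinset_card _ (hf _)]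
    simp
  rw [hK, partSum, partSum, finsum_mem_eq_finite_toFinset_sum _ (hf _),
    finsum_mem_eq_finite_toFinset_sum _ (hf _), Finset.mul_sum, ← Finset.sum_add_distrib]
  have hsub : ∀ m : B → ℕ, m i ≠ 0 → m - Pi.single i 1 + Pi.single i 1 = m := by
    intro m hm
    refine tsub_add_cancel_of_le ?_
    intro j
    rcases eq_or_ne j i with rfl | hne
    · simpa [Nat.one_le_iff_ne_zero] using hm
    · simp [hne]
  refine Finset.sum_bij_ne_zero (fun m _ _ => m - Pi.single i 1) ?_ ?_ ?_ ?_
  · intro m hm h0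
    rw [Set.Finite.mem_toFinset] at hm ⊢
    refine ⟨fun j hj => (Nat.sub_le _ _).trans (hm.1 j hj), ?_⟩
    have := sum_add_single b (m - Pi.single i 1) i
    rw [hsub m (by exact_mod_cast h0), hm.2] at this
    rw [this, add_sub_cancel_right]
  · intro m _ h0 m' _ h0' h
    rw [← hsub m (by exact_mod_cast h0), h, hsub m' (by exact_mod_cast h0')]
  · intro m hm h0
    rw [Set.Finite.mem_toFinset] at hm
    refine ⟨m + Pi.single i 1, ?_, ?_, ?_⟩
    · rw [Set.Finite.mem_toFinset]
      refine ⟨fun j hj => ?_, by rw [sum_add_single, hm.2, sub_add_cancel]⟩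
      have hj1 := hm.1 j hj
      -- For an odd part `j = i`, a nonzero weight `1 - m j` forces `m j = 0`.
      rcases eq_or_ne j i with rfl | hne
      · simp only [partSign, hj, if_true] at h0
        simp only [Pi.add_apply, Pi.single_eq_same]
        omega
      · simpa [hne] using hj1
    · simp only [Pi.add_apply, Pi.single_eq_same]
      omega
    · exact add_tsub_cancel_right _ _
  · intro m hm h0
    rw [Set.Finite.mem_toFinset] at hm
    have h1 := hm.1 i
    simp only [Pi.sub_apply, Pi.single_eq_same, partSign]
    split_ifs with hε
    · have := h1 hε
      omega
    · omega

theorem partSum_iterate {Q : Type} [AddCommGroup Q] (ht : Q →+ ℤ) {B : Type} [Fintype B]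
    {b : B → Q} (hb : ∀ i, 0 < ht (b i)) (ε : B → Bool) (i : B) (ν : Q) (n : ℕ) :
    partSum b ε i ν =
      ∑ r ∈ Finset.Icc 1 n, partSign ε i ^ (r - 1) * (KPart b ε (ν - r • b i) : ℤ) +
        partSign ε i ^ n * partSum b ε i (ν - n • b i) := by
  induction n with
  | zero => simp
  | succ n ih =>
    rw [Finset.sum_Icc_succ_top (by omega), ih, partSum_rec ht hb ε i (ν - n • b i), sub_sub,
      ← succ_nsmul, Nat.add_sub_cancel, pow_succ]
    ring

theorem stmt13 (Q : Type) [AddCommGroup Q] [Module.Free ℤ Q]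
    (ht : Q →+ ℤ) (B : Type) [Fintype B] (b : B → Q)
    (hb : ∀ i, 0 < ht (b i)) (ε : B → Bool) (ν : Q) (i : B) :
    (PartSet b ε ν).Finite ∧
    ({r : ℕ | 1 ≤ r ∧ KPart b ε (ν - r • b i) ≠ 0}).Finite ∧
    (∑ᶠ m : PartSet b ε ν, ((m : B → ℕ) i : ℤ)) =
      ∑ᶠ (r : ℕ) (_ : 1 ≤ r),
        (if ε i then (-1 : ℤ) ^ (r - 1) else 1) * (KPart b ε (ν - r • b i) : ℤ) := by
  have hvan : ∀ r : ℕ, ht ν < r → KPart b ε (ν - r • b i) = 0 := by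
    intro r hr
    rw [KPart, partSet_sub_eq_empty ht hb ε i hr]
    simp
  refine ⟨partSet_finite ht hb ε ν, ?_, ?_⟩
  · refine (Set.finite_Iic (ht ν).toNat).subset fun r hr => ?_
    by_contra h
    rw [Set.mem_Iic] at h
    exact hr.2 (hvan r (by omega))
  · have hT := partSum_iterate ht hb ε i ν ((ht ν).toNat + 1)
    have h0 : partSum b ε i (ν - ((ht ν).toNat + 1) • b i) = 0 := by
      rw [partSum, partSet_sub_eq_empty ht hb ε i (by omega)]
      simp
    rw [h0, mul_zero, add_zero] at hT
    have hL : (∑ᶠ m : PartSet b ε ν, ((m : B → ℕ) i : ℤ)) = partSum b ε i ν :=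
      finsum_set_coe_eq_finsum_mem (f := fun m : B → ℕ => (m i : ℤ)) _
    rw [hL, hT]
    symm
    have hsign : ∀ r : ℕ, (if ε i then (-1 : ℤ) ^ (r - 1) else 1) = partSign ε i ^ (r - 1) := by
      intro r
      unfold partSign
      split_ifs <;> simp
    simp only [hsign]
    refine finsum_mem_eq_sum_of_inter_support_eq (s := {r : ℕ | 1 ≤ r}) _ ?_
    ext r
    simp only [Set.mem_inter_iff, Set.mem_ofPred_eq, Finset.coe_Icc, Set.mem_Icc,
      Function.mem_support]
    refine ⟨fun ⟨h1, h2⟩ => ⟨⟨h1, ?_⟩, h2⟩, fun ⟨h1, h2⟩ => ⟨h1.1, h2⟩⟩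
    by_contra h
    exact h2 (by rw [hvan r (by omega)]; simp)
end

section
/- Let Δ be the root system of a finite-dimensional complex semisimple Lie algebra, with Weyl group W, positive system Δ⁺, half-sum of positive roots ρ, and dot action w.μ := w(μ+ρ) − ρ. Then for each α ∈ Δ⁺ there exists R ∈ ℤ≥1 such that for all integers r ≥ R the following holds: if rα = w.(r′α′) for some w ∈ W, some integer r′ ≥ 1, and some α′ ∈ Δ ∪ {0}, then w is the identity or w is the reflection s_α. -/
/-!
Statement 15: for each positive root `α` there is `R ≥ 1` such that for all integers
`r ≥ R`: if `rα = w.(r′α′)` (dot action `w.μ = w(μ+ρ) − ρ`) for some `w ∈ W`, some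
integer `r′ ≥ 1` and some `α′ ∈ Δ ∪ {0}`, then `w = 1` or `w = s_α`.
-/

open scoped RealInnerProductSpace

/-!
Put `β = w α'`. The hypothesis reads `r α - r' β = w ρ - ρ`, whose right side has norm at most
`2 ‖ρ‖`. If `β ≠ ± α`, some `u ⟂ β` has `⟪α, u⟫ > 0`, so pairing with `u` bounds `r`;
as `Δ ∪ {0}` is finite, all such `β` are excluded by one bound `R`
(`exists_orthogonal_pos`, `eventually_not_bounded`). Otherwise `β = ± α`, hence `w ρ = ρ + k α`,
and `‖w ρ‖ = ‖ρ‖` forces `w ρ = ρ` or `w ρ = s_α ρ`. It remains to see that the stabiliser of `ρ`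
in `W` is trivial (`eq_one_of_map_rho`).

A nonempty sum of positive roots is never zero (`add_ne_zero'`), so `w ρ = ρ` forces `w P = P`
(`maps_pos_of_map_rho`). Simple roots are the indecomposable positive roots; `s_α` for `α` simple
permutes `P \ {α}` (`refl_mem_pos`), every element of `W` is a word in simple reflections
(`exists_word`), and the exchange property (`exchange`) shortens any nonempty word that
preserves `P` (`word_eq_one`).
-/

section RootSystems

variable {E : Type} [NormedAddCommGroup E] [InnerProductSpace ℝ E]

/-- `P` is a positive system of the reduced crystallographic root system `Δ`, described only by
`Δ = P ⊔ -P` and closure of `P` under those sums that are roots. -/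
structure IsPosSys (Δ P : Finset E) : Prop where
  zero_notMem : (0 : E) ∉ Δ
  crys : ∀ α ∈ Δ, ∀ β ∈ Δ, ∃ n : ℤ, 2 * ⟪β, α⟫ = (n : ℝ) * ⟪α, α⟫
  refl_mem : ∀ α ∈ Δ, ∀ β ∈ Δ, β - (2 * ⟪β, α⟫ / ⟪α, α⟫) • α ∈ Δ
  red : ∀ α ∈ Δ, ∀ t : ℝ, t • α ∈ Δ → t = 1 ∨ t = -1
  sub : P ⊆ Δ
  pos_iff : ∀ α ∈ Δ, (α ∈ P ↔ ¬(-α ∈ P))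
  closed : ∀ α ∈ P, ∀ β ∈ P, α + β ∈ Δ → α + β ∈ P

/-- The orthogonal reflection `s_α` in the hyperplane `αᗮ`. -/
noncomputable def rootRefl (α : E) : E ≃ₗᵢ[ℝ] E := (Submodule.span ℝ {α})ᗮ.reflection

theorem rootRefl_apply (α v : E) : rootRefl α v = v - (2 * ⟪v, α⟫ / ⟪α, α⟫) • α := by
  rw [rootRefl, Submodule.reflection_orthogonal_apply, Submodule.reflection_singleton_apply,
    real_inner_comm, real_inner_self_eq_norm_sq]
  simp only [RCLike.ofReal_real_eq_id, id_eq]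
  rw [neg_sub, mul_div_assoc, mul_smul]
  simp only [two_smul]

theorem eq_rootRefl_iff (w : E ≃ₗᵢ[ℝ] E) (α : E) :
    w = rootRefl α ↔ ∀ v : E, w v = v - (2 * ⟪v, α⟫ / ⟪α, α⟫) • α := by
  simp only [← rootRefl_apply]
  exact ⟨fun h v => by rw [h], fun h => LinearIsometryEquiv.ext h⟩

theorem rootRefl_self {α : E} (h : α ≠ 0) : rootRefl α α = -α := by
  have : ⟪α, α⟫ ≠ 0 := inner_self_ne_zero.2 h
  rw [rootRefl_apply, mul_div_assoc, div_self this, mul_one, two_smul]; abel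

theorem rootRefl_rootRefl (α v : E) : rootRefl α (rootRefl α v) = v :=
  Submodule.reflection_reflection _ v

theorem rootRefl_mul_self (α : E) : rootRefl α * rootRefl α = 1 :=
  LinearIsometryEquiv.ext fun v => rootRefl_rootRefl α v

theorem rootRefl_neg (α : E) : rootRefl (-α) = rootRefl α := by
  rw [eq_rootRefl_iff]; intro v
  rw [rootRefl_apply]
  simp [neg_div]

theorem conj_rootRefl (w : E ≃ₗᵢ[ℝ] E) (α : E) : w * rootRefl α = rootRefl (w α) * w := by
  refine LinearIsometryEquiv.ext fun v => ?_
  simp only [LinearIsometryEquiv.coe_mul, Function.comp_apply, rootRefl_apply,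
    LinearIsometryEquiv.inner_map_map, map_sub, map_smul]

/-- The product of the reflections in the listed vectors, read from left to right. -/
noncomputable def word (L : List E) : E ≃ₗᵢ[ℝ] E := (L.map rootRefl).prod

theorem word_cons (a : E) (L : List E) : word (a :: L) = rootRefl a * word L := by
  simp [word]

theorem word_append (L M : List E) : word (L ++ M) = word L * word M := by
  simp [word]

theorem word_singleton (a : E) : word [a] = rootRefl a := by simp [word]

theorem word_reverse_mul (L : List E) : word L.reverse * word L = 1 := by
  induction L with
  | nil => simp [word]
  | cons a L ih =>
    rw [List.reverse_cons, word_append, word_singleton, word_cons, mul_assoc,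
      ← mul_assoc (rootRefl a), rootRefl_mul_self, one_mul, ih]

/-- A simple root: a positive root that is not the sum of two positive roots. -/
def IsSimpleRoot (P : Finset E) (α : E) : Prop :=
  α ∈ P ∧ ∀ β ∈ P, ∀ γ ∈ P, α ≠ β + γ

namespace IsPosSys

variable {Δ P : Finset E}

/-! ### Root strings and sums of positive roots -/

theorem ne_zero (h : IsPosSys Δ P) {α : E} (hα : α ∈ Δ) : α ≠ 0 :=
  fun e => h.zero_notMem (e ▸ hα)

theorem inner_self_pos (h : IsPosSys Δ P) {α : E} (hα : α ∈ Δ) : 0 < ⟪α, α⟫ :=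
  real_inner_self_pos.2 (h.ne_zero hα)

theorem rootRefl_mem (h : IsPosSys Δ P) {α β : E} (hα : α ∈ Δ) (hβ : β ∈ Δ) :
    rootRefl α β ∈ Δ := by
  rw [rootRefl_apply]; exact h.refl_mem α hα β hβ

theorem neg_mem (h : IsPosSys Δ P) {α : E} (hα : α ∈ Δ) : -α ∈ Δ := by
  rw [← rootRefl_self (h.ne_zero hα)]; exact h.rootRefl_mem hα hα

theorem neg_mem_pos (h : IsPosSys Δ P) {α : E} (hα : α ∈ Δ) (hP : α ∉ P) : -α ∈ P := by
  by_contra hn; exact hP ((h.pos_iff α hα).2 hn)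

theorem neg_notMem_pos (h : IsPosSys Δ P) {α : E} (hP : α ∈ P) : -α ∉ P :=
  (h.pos_iff α (h.sub hP)).1 hP

/-- Two roots at an obtuse angle add up to a root: their Cartan integers are negative with product
less than `4` by strict Cauchy-Schwarz, so one of them is `-1`. -/
theorem root_add_mem (h : IsPosSys Δ P) {α β : E} (hα : α ∈ Δ) (hβ : β ∈ Δ) (hneg : ⟪α, β⟫ < 0)
    (hne : β ≠ -α) : α + β ∈ Δ := by
  obtain ⟨n, hn⟩ := h.crys α hα β hβ
  obtain ⟨m, hm⟩ := h.crys β hβ α hα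
  have hA := h.inner_self_pos hα
  have hB := h.inner_self_pos hβ
  have hs : ⟪β, α⟫ = ⟪α, β⟫ := real_inner_comm _ _
  rw [hs] at hn
  have strict : ⟪α, β⟫ * ⟪α, β⟫ < ⟪α, α⟫ * ⟪β, β⟫ := by
    have hz : ⟪α, α⟫ • β - ⟪α, β⟫ • α ≠ 0 := by
      intro hz
      have hb : (⟪α, β⟫ / ⟪α, α⟫) • α = β := by
        rw [div_eq_inv_mul, mul_smul, ← sub_eq_zero.1 hz, smul_smul, inv_mul_cancel₀ hA.ne',
          one_smul]
      have hlt : ⟪α, β⟫ / ⟪α, α⟫ < 0 := div_neg_of_neg_of_pos hneg hA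
      rcases h.red α hα _ (hb ▸ hβ) with h1 | h1
      · linarith
      · rw [h1, neg_one_smul] at hb; exact hne hb.symm
    have := real_inner_self_pos.2 hz
    simp only [inner_sub_left, inner_sub_right, real_inner_smul_left, real_inner_smul_right,
      hs] at this
    by_contra hc
    push Not at hc
    nlinarith
  have hn0 : n < 0 := by
    by_contra hc
    have : (0 : ℝ) ≤ n := by exact_mod_cast not_lt.1 hc
    nlinarith
  have hm0 : m < 0 := by
    by_contra hc
    have : (0 : ℝ) ≤ m := by exact_mod_cast not_lt.1 hc
    nlinarith
  have hnm : n * m < 4 := by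
    have : (n : ℝ) * m * (⟪α, α⟫ * ⟪β, β⟫) < 4 * (⟪α, α⟫ * ⟪β, β⟫) := by
      calc (n : ℝ) * m * (⟪α, α⟫ * ⟪β, β⟫) = (n * ⟪α, α⟫) * (m * ⟪β, β⟫) := by ring
        _ = (2 * ⟪α, β⟫) * (2 * ⟪α, β⟫) := by rw [← hn, ← hm]
        _ < _ := by linarith
    have := lt_of_mul_lt_mul_right this (by positivity)
    exact_mod_cast this
  have : n = -1 ∨ m = -1 := by
    by_contra hc
    push Not at hc
    have h1 : n ≤ -2 := by omega
    have h2 : m ≤ -2 := by omega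
    nlinarith
  rcases this with e | e
  · have := h.refl_mem α hα β hβ
    rw [hs, hn, mul_div_cancel_right₀ _ hA.ne', e] at this
    simpa [add_comm] using this
  · have := h.refl_mem β hβ α hα
    rw [hm, mul_div_cancel_right₀ _ hB.ne', e] at this
    simpa using this

/-- A nonempty sum of positive roots is nonzero: a vanishing sum has two terms at an obtuse angle,
and replacing them by their sum, again a positive root, gives a shorter vanishing sum. -/
theorem multiset_sum_ne_zero (h : IsPosSys Δ P) (n : ℕ) :
    ∀ (a : E) (m : Multiset E), m.card = n → a ∈ P → (∀ x ∈ m, x ∈ P) → a + m.sum ≠ 0 := by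
  induction n with
  | zero =>
    intro a m hc ha _ hz
    rw [Multiset.card_eq_zero.1 hc, Multiset.sum_zero, add_zero] at hz
    exact h.ne_zero (h.sub ha) hz
  | succ n ih =>
    intro a m hc ha hm hz
    have hex : ∃ b ∈ m, ⟪a, b⟫ < 0 := by
      by_contra hno
      push Not at hno
      have h1 : 0 ≤ ⟪a, m.sum⟫ := by
        have key : ∀ s : Multiset E, (∀ b ∈ s, 0 ≤ ⟪a, b⟫) → 0 ≤ ⟪a, s.sum⟫ := by
          intro s
          induction s using Multiset.induction with
          | empty => simp
          | cons b s ihs =>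
            intro hs
            rw [Multiset.sum_cons, inner_add_right]
            exact add_nonneg (hs b (Multiset.mem_cons_self b s))
              (ihs fun x hx => hs x (Multiset.mem_cons_of_mem hx))
        exact key m hno
      have h2 := h.inner_self_pos (h.sub ha)
      have h3 : ⟪a, a + m.sum⟫ = 0 := by rw [hz, inner_zero_right]
      rw [inner_add_right] at h3
      linarith
    obtain ⟨b, hb, hab⟩ := hex
    obtain ⟨m', rfl⟩ := Multiset.exists_cons_of_mem hb
    have hbP := hm b hb
    have hne : b ≠ -a := fun e => h.neg_notMem_pos ha (e ▸ hbP)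
    refine ih (a + b) m' (by simpa using hc)
      (h.closed a ha b hbP (h.root_add_mem (h.sub ha) (h.sub hbP) hab hne))
      (fun x hx => hm x (Multiset.mem_cons_of_mem hx)) ?_
    rw [Multiset.sum_cons] at hz
    rw [← hz, add_assoc]

theorem add_ne_zero' (h : IsPosSys Δ P) {x y : E} (hx : x ∈ P)
    (hy : y ∈ AddSubmonoid.closure (P : Set E)) : x + y ≠ 0 := by
  obtain ⟨m, hm, rfl⟩ := AddSubmonoid.exists_multiset_of_mem_closure hy
  exact h.multiset_sum_ne_zero _ x m rfl hx fun z hz => by simpa using hm z hz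

/-- Induction along the order in which `γ` precedes `β` when `β - γ` is a nonempty sum of
positive roots. -/
theorem pos_induction (h : IsPosSys Δ P) (Q : E → Prop)
    (step : ∀ β ∈ P, (∀ γ ∈ P, (∃ x ∈ P, ∃ y ∈ AddSubmonoid.closure (P : Set E),
      β = γ + (x + y)) → Q γ) → Q β) : ∀ β ∈ P, Q β := by
  let r : P → P → Prop := fun γ β => ∃ x ∈ P, ∃ y ∈ AddSubmonoid.closure (P : Set E),
    (β : E) = γ + (x + y)
  have : IsTrans P r := ⟨by
    rintro a b c ⟨x, hx, y, hy, e⟩ ⟨x', hx', y', hy', e'⟩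
    refine ⟨x, hx, y + (x' + y'), add_mem hy
      (add_mem (AddSubmonoid.subset_closure hx') hy'), ?_⟩
    rw [e', e]; abel⟩
  have : Std.Irrefl r := ⟨by
    rintro a ⟨x, hx, y, hy, e⟩
    exact h.add_ne_zero' hx hy (by simpa using e)⟩
  have wf : WellFounded r := Finite.wellFounded_of_trans_of_irrefl r
  intro β hβ
  have key : ∀ b : P, Q b := fun b => wf.induction b fun b ih =>
    step b b.2 fun γ hγ hr => ih ⟨γ, hγ⟩ hr
  exact key ⟨β, hβ⟩

/-! ### Simple roots and simple reflections -/

theorem mem_closure_simple (h : IsPosSys Δ P) :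
    ∀ β ∈ P, β ∈ AddSubmonoid.closure {α | IsSimpleRoot P α} := by
  refine h.pos_induction _ fun β hβ ih => ?_
  by_cases hs : IsSimpleRoot P β
  · exact AddSubmonoid.subset_closure hs
  · have : ∃ γ ∈ P, ∃ δ ∈ P, β = γ + δ := by
      by_contra hc
      push Not at hc
      exact hs ⟨hβ, hc⟩
    obtain ⟨γ, hγ, δ, hδ, e⟩ := this
    rw [e]
    refine add_mem (ih γ hγ ⟨δ, hδ, 0, zero_mem _, by rw [add_zero]; exact e⟩)
      (ih δ hδ ⟨γ, hγ, 0, zero_mem _, by rw [add_zero, add_comm]; exact e⟩)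

theorem exists_simple_inner_pos (h : IsPosSys Δ P) {β : E} (hβ : β ∈ P) :
    ∃ α, IsSimpleRoot P α ∧ 0 < ⟪β, α⟫ := by
  by_contra hc
  push Not at hc
  have key : ⟪β, β⟫ ≤ 0 := by
    refine AddSubmonoid.closure_induction (motive := fun x _ => ⟪β, x⟫ ≤ 0) ?_ ?_ ?_
      (h.mem_closure_simple β hβ)
    · exact fun x hx => hc x hx
    · simp
    · intro x y _ _ hx hy
      rw [inner_add_right]; linarith
  exact absurd (h.inner_self_pos (h.sub hβ)) (not_lt.2 key)

theorem sub_simple_mem (h : IsPosSys Δ P) {α γ : E} (hα : IsSimpleRoot P α) (hγ : γ ∈ P)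
    (hne : γ ≠ α) (hpos : 0 < ⟪γ, α⟫) : γ - α ∈ P := by
  have hΔ : γ - α ∈ Δ := by
    rw [sub_eq_add_neg]
    refine h.root_add_mem (h.sub hγ) (h.neg_mem (h.sub hα.1)) (by rw [inner_neg_right]; linarith) ?_
    exact fun e => hne (neg_injective e).symm
  by_contra hn
  have := h.neg_mem_pos hΔ hn
  exact hα.2 γ hγ _ this (by abel)

/-- Multiples of a simple root decompose into two positive roots only trivially. Subtracting `α`
from a summand at an acute angle to it reduces `k`. -/
theorem eq_simple_of_add_eq (h : IsPosSys Δ P) {α : E} (hα : IsSimpleRoot P α) (k : ℕ) :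
    ∀ γ ∈ P, ∀ δ ∈ P, γ + δ = (k : ℝ) • α → γ = α ∨ δ = α := by
  have step : ∀ k : ℕ, (∀ γ ∈ P, ∀ δ ∈ P, γ + δ = (k : ℝ) • α → γ = α ∨ δ = α) →
      ∀ γ ∈ P, ∀ δ ∈ P, γ + δ = ((k + 1 : ℕ) : ℝ) • α → 0 < ⟪γ, α⟫ → γ = α ∨ δ = α := by
    intro k ih γ hγ δ hδ e hp
    by_cases hne : γ = α
    · exact Or.inl hne
    have e' : γ - α + δ = (k : ℝ) • α := by
      rw [sub_add_eq_add_sub, e]; push_cast; rw [add_smul, one_smul]; abel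
    rcases ih _ (h.sub_simple_mem hα hγ hne hp) δ hδ e' with e1 | e1
    · have h2 : γ = (2 : ℝ) • α := by rw [two_smul, ← sub_eq_iff_eq_add]; exact e1
      rcases h.red α (h.sub hα.1) 2 (h2 ▸ h.sub hγ) with h3 | h3 <;> norm_num at h3
    · exact Or.inr e1
  induction k with
  | zero =>
    intro γ hγ δ hδ e
    exact absurd (by simpa using e) (h.add_ne_zero' hγ (AddSubmonoid.subset_closure hδ))
  | succ k ih =>
    intro γ hγ δ hδ e
    have hs : 0 < ⟪γ, α⟫ + ⟪δ, α⟫ := by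
      rw [← inner_add_left, e, real_inner_smul_left]
      exact mul_pos (by positivity) (h.inner_self_pos (h.sub hα.1))
    rcases lt_or_ge 0 ⟪γ, α⟫ with hp | hp
    · exact step k ih γ hγ δ hδ e hp
    · exact (step k ih δ hδ γ hγ (by rw [add_comm]; exact e) (by linarith)).symm

theorem exists_int_rootRefl (h : IsPosSys Δ P) {α γ : E} (hα : α ∈ Δ) (hγ : γ ∈ Δ) :
    ∃ n : ℤ, 2 * ⟪γ, α⟫ = n * ⟪α, α⟫ ∧ rootRefl α γ = γ - (n : ℝ) • α := by
  obtain ⟨n, hn⟩ := h.crys α hα γ hγ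
  refine ⟨n, hn, ?_⟩
  rw [rootRefl_apply, hn, mul_div_cancel_right₀ _ (h.inner_self_pos hα).ne']

/-- `s_α` permutes `P \ {α}` for `α` simple: if `-s_α γ` were positive, `γ - s_α γ` would be a
multiple of `α` split into two positive roots. -/
theorem refl_mem_pos (h : IsPosSys Δ P) {α γ : E} (hα : IsSimpleRoot P α) (hγ : γ ∈ P)
    (hne : γ ≠ α) : rootRefl α γ ∈ P := by
  have hαΔ := h.sub hα.1
  by_contra hn
  have hδ := h.neg_mem_pos (h.rootRefl_mem hαΔ (h.sub hγ)) hn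
  obtain ⟨n, -, e⟩ := h.exists_int_rootRefl hαΔ (h.sub hγ)
  have hsum : γ + -rootRefl α γ = (n : ℝ) • α := by rw [e]; abel
  rcases le_or_gt 0 n with h0 | h0
  · lift n to ℕ using h0
    rcases h.eq_simple_of_add_eq hα n γ hγ _ hδ (by simpa using hsum) with h1 | h1
    · exact hne h1
    · rw [h1] at hsum
      have hg : γ = ((n : ℝ) - 1) • α := by
        rw [sub_smul, one_smul, eq_sub_iff_add_eq]; simpa using hsum
      rcases h.red α hαΔ _ (hg ▸ h.sub hγ) with h2 | h2
      · rw [h2, one_smul] at hg; exact hne hg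
      · rw [h2, neg_one_smul] at hg
        exact h.neg_notMem_pos hα.1 (hg ▸ hγ)
  · obtain ⟨k, rfl⟩ : ∃ k : ℕ, n = -(k : ℤ) := ⟨n.natAbs, by omega⟩
    refine h.add_ne_zero' hγ (y := -rootRefl α γ + k • α)
      (add_mem (AddSubmonoid.subset_closure hδ)
        (nsmul_mem (AddSubmonoid.subset_closure hα.1) k)) ?_
    rw [← add_assoc, hsum, ← Nat.cast_smul_eq_nsmul ℝ]
    simp

/-! ### Words in simple reflections -/

/-- Reflections in positive roots are words in simple reflections: conjugate `s_β` by a simple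
reflection that moves `β` down in the order. -/
theorem exists_word_refl (h : IsPosSys Δ P) :
    ∀ β ∈ P, ∃ L : List E, (∀ a ∈ L, IsSimpleRoot P a) ∧ rootRefl β = word L := by
  refine h.pos_induction _ fun β hβ ih => ?_
  by_cases hs : IsSimpleRoot P β
  · exact ⟨[β], by simpa using hs, (word_singleton β).symm⟩
  obtain ⟨α, hα, hp⟩ := h.exists_simple_inner_pos hβ
  have hne : β ≠ α := fun e => hs (e ▸ hα)
  have hγ := h.refl_mem_pos hα hβ hne
  obtain ⟨n, hn, e⟩ := h.exists_int_rootRefl (h.sub hα.1) (h.sub hβ)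
  have hn0 : 0 < n := by
    by_contra hc
    have h1 : (n : ℝ) ≤ 0 := by exact_mod_cast not_lt.1 hc
    have := h.inner_self_pos (h.sub hα.1)
    nlinarith
  obtain ⟨k, rfl⟩ : ∃ k : ℕ, n = (k : ℤ) + 1 := ⟨(n - 1).toNat, by omega⟩
  obtain ⟨L, hL, hLe⟩ := ih _ hγ ⟨α, hα.1, k • α,
    nsmul_mem (AddSubmonoid.subset_closure hα.1) k, by
      rw [e, ← Nat.cast_smul_eq_nsmul ℝ]
      push_cast
      rw [add_smul, one_smul]; abel⟩
  refine ⟨α :: (L ++ [α]), ?_, ?_⟩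
  · intro a ha
    simp only [List.mem_cons, List.mem_append, List.not_mem_nil, or_false] at ha
    rcases ha with rfl | ha | rfl
    exacts [hα, hL a ha, hα]
  · rw [word_cons, word_append, word_singleton, ← hLe, ← mul_assoc, conj_rootRefl (rootRefl α),
      rootRefl_rootRefl, mul_assoc, rootRefl_mul_self, mul_one]

theorem exists_word (h : IsPosSys Δ P) {w : E ≃ₗᵢ[ℝ] E}
    (hw : w ∈ Subgroup.closure {w : E ≃ₗᵢ[ℝ] E | ∃ α ∈ Δ, w = rootRefl α}) :
    ∃ L : List E, (∀ a ∈ L, IsSimpleRoot P a) ∧ w = word L := by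
  induction hw using Subgroup.closure_induction with
  | mem x hx =>
    obtain ⟨β, hβ, rfl⟩ := hx
    by_cases hP : β ∈ P
    · exact h.exists_word_refl β hP
    · rw [← rootRefl_neg]; exact h.exists_word_refl _ (h.neg_mem_pos hβ hP)
  | one => exact ⟨[], by simp, by simp [word]⟩
  | mul x y _ _ hx hy =>
    obtain ⟨L, hL, rfl⟩ := hx
    obtain ⟨M, hM, rfl⟩ := hy
    exact ⟨L ++ M, fun a ha => (List.mem_append.1 ha).elim (hL a) (hM a),
      (word_append L M).symm⟩
  | inv x _ hx =>
    obtain ⟨L, hL, rfl⟩ := hx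
    exact ⟨L.reverse, fun a ha => hL a (List.mem_reverse.1 ha),
      (eq_inv_of_mul_eq_one_left (word_reverse_mul L)).symm⟩

theorem word_mem (h : IsPosSys Δ P) {L : List E} (hL : ∀ a ∈ L, IsSimpleRoot P a) {β : E}
    (hβ : β ∈ Δ) : word L β ∈ Δ := by
  induction L with
  | nil => simpa [word] using hβ
  | cons a L ih =>
    rw [word_cons]
    exact h.rootRefl_mem (h.sub (hL a List.mem_cons_self).1)
      (ih fun b hb => hL b (List.mem_cons_of_mem a hb))

/-- The exchange property: if a word sends the simple root `α` to a negative root, multiplying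
it by `s_α` deletes a letter. -/
theorem exchange (h : IsPosSys Δ P) {α : E} (hα : IsSimpleRoot P α) (L : List E)
    (hL : ∀ a ∈ L, IsSimpleRoot P a) (hneg : word L α ∉ P) :
    ∃ M : List E, (∀ a ∈ M, IsSimpleRoot P a) ∧ M.length + 1 = L.length ∧
      word L * rootRefl α = word M := by
  induction L with
  | nil => exact absurd hα.1 (by simpa [word] using hneg)
  | cons a L ih =>
    have hL' : ∀ b ∈ L, IsSimpleRoot P b := fun b hb => hL b (List.mem_cons_of_mem a hb)
    have ha := hL a List.mem_cons_self
    by_cases hc : word L α ∈ P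
    · have e : word L α = a := by
        by_contra hne
        rw [word_cons] at hneg
        exact hneg (h.refl_mem_pos ha hc hne)
      refine ⟨L, hL', by simp, ?_⟩
      rw [word_cons, mul_assoc, conj_rootRefl, e, ← mul_assoc, rootRefl_mul_self, one_mul]
    · obtain ⟨M, hM, hlen, e⟩ := ih hL' hc
      refine ⟨a :: M, ?_, by simp [hlen], by rw [word_cons, word_cons, mul_assoc, e]⟩
      intro b hb
      rcases List.mem_cons.1 hb with rfl | hb
      exacts [ha, hM b hb]

/-- A word in simple reflections that preserves `P` is trivial. Its last letter `s_α` sends `α` to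
`-α`, so the preceding letters send `α` to a negative root, and the exchange property gives a word
for the same element that is two letters shorter. -/
theorem word_eq_one (h : IsPosSys Δ P) (n : ℕ) : ∀ L : List E, L.length = n →
    (∀ a ∈ L, IsSimpleRoot P a) → (∀ γ ∈ P, word L γ ∈ P) → word L = 1 := by
  induction n using Nat.strong_induction_on with
  | _ n ih =>
    intro L hn hL hP
    rcases List.eq_nil_or_concat L with rfl | ⟨L₀, α, rfl⟩
    · simp [word]
    rw [List.concat_eq_append] at *
    have hα : IsSimpleRoot P α := hL α (by simp)
    have e : word (L₀ ++ [α]) = word L₀ * rootRefl α := by rw [word_append, word_singleton]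
    have hneg : word L₀ α ∉ P := by
      have h1 := hP α hα.1
      rw [e, LinearIsometryEquiv.coe_mul, Function.comp_apply,
        rootRefl_self (h.ne_zero (h.sub hα.1)), map_neg] at h1
      intro h2
      exact h.neg_notMem_pos h2 h1
    obtain ⟨M, hM, hlen, e'⟩ := h.exchange hα L₀ (fun a ha => hL a (by simp [ha])) hneg
    have hLM : word (L₀ ++ [α]) = word M := e.trans e'
    rw [hLM] at hP ⊢
    rw [List.length_append, List.length_singleton] at hn
    exact ih M.length (by omega) M rfl hM hP

/-! ### The stabiliser of `ρ` -/

/-- If `w ρ = ρ`, then `P` and `w P` have the same sum; cancelling common terms, a root in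
`w P \ P` would yield a nonempty sum of positive roots equal to zero. -/
theorem maps_pos_of_map_rho (h : IsPosSys Δ P) {ρ : E} (hρ : (2 : ℝ) • ρ = ∑ α ∈ P, α)
    {w : E ≃ₗᵢ[ℝ] E} (hw : ∀ β ∈ Δ, w β ∈ Δ) (hwρ : w ρ = ρ) : ∀ γ ∈ P, w γ ∈ P := by
  classical
  intro γ hγ
  by_contra hn
  have hsum : ∑ x ∈ P.image w, x = ∑ x ∈ P, x := by
    rw [Finset.sum_image (fun a _ b _ e => w.injective e), ← map_sum, ← hρ, map_smul, hwρ]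
  have hdiff := Finset.sum_sdiff_sub_sum_sdiff (s₁ := P.image w) (s₂ := P) (f := fun x : E => x)
  rw [hsum, sub_self] at hdiff
  have hmem : w γ ∈ P.image w \ P :=
    Finset.mem_sdiff.2 ⟨Finset.mem_image_of_mem w hγ, hn⟩
  rw [← Finset.add_sum_erase _ _ hmem] at hdiff
  refine h.add_ne_zero' (h.neg_mem_pos (hw γ (h.sub hγ)) hn)
    (y := ∑ x ∈ P \ P.image w, x + ∑ x ∈ (P.image w \ P).erase (w γ), -x) ?_ ?_
  · refine add_mem (sum_mem fun x hx => AddSubmonoid.subset_closure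
      (Finset.mem_sdiff.1 hx).1) (sum_mem fun x hx => AddSubmonoid.subset_closure ?_)
    obtain ⟨hx1, hx2⟩ := Finset.mem_sdiff.1 (Finset.mem_of_mem_erase hx)
    obtain ⟨y, hy, rfl⟩ := Finset.mem_image.1 hx1
    exact h.neg_mem_pos (hw y (h.sub hy)) hx2
  · rw [Finset.sum_neg_distrib, ← hdiff]; abel

theorem eq_one_of_map_rho (h : IsPosSys Δ P) {ρ : E} (hρ : (2 : ℝ) • ρ = ∑ α ∈ P, α)
    {w : E ≃ₗᵢ[ℝ] E}
    (hw : w ∈ Subgroup.closure {w : E ≃ₗᵢ[ℝ] E | ∃ α ∈ Δ, w = rootRefl α})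
    (hwρ : w ρ = ρ) : w = 1 := by
  obtain ⟨L, hL, rfl⟩ := h.exists_word hw
  exact h.word_eq_one _ L rfl hL
    (h.maps_pos_of_map_rho hρ (fun β hβ => h.word_mem hL hβ) hwρ)

/-! ### Directions other than `± α` -/

/-- For a root `β` the witness is the component of `α` orthogonal to `β`, scaled by
`⟪β, β⟫`. By reducedness it vanishes only when `β = ± α`. For `β = 0` the witness is `α` itself. -/
theorem exists_orthogonal_pos (h : IsPosSys Δ P) {α β : E} (hα : α ∈ Δ) (hβ : β ∈ Δ ∨ β = 0)
    (h1 : β ≠ α) (h2 : β ≠ -α) : ∃ u : E, ⟪β, u⟫ = 0 ∧ 0 < ⟪α, u⟫ := by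
  rcases hβ with hβ | rfl
  · have hB := h.inner_self_pos hβ
    have hz : ⟪β, β⟫ • α - ⟪α, β⟫ • β ≠ 0 := by
      intro hz
      have ha : (⟪α, β⟫ / ⟪β, β⟫) • β = α := by
        rw [div_eq_inv_mul, mul_smul, ← sub_eq_zero.1 hz, smul_smul, inv_mul_cancel₀ hB.ne',
          one_smul]
      rcases h.red β hβ _ (ha ▸ hα) with e | e
      · rw [e, one_smul] at ha; exact h1 ha
      · rw [e, neg_one_smul] at ha; exact h2 (by rw [← ha, neg_neg])
    have horth : ⟪β, ⟪β, β⟫ • α - ⟪α, β⟫ • β⟫ = 0 := by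
      rw [inner_sub_right, real_inner_smul_right, real_inner_smul_right, real_inner_comm β α]
      ring
    refine ⟨_, horth, ?_⟩
    have := real_inner_self_pos.2 hz
    nth_rewrite 1 [inner_sub_left] at this
    rw [real_inner_smul_left, real_inner_smul_left, horth, mul_zero, sub_zero] at this
    exact pos_of_mul_pos_right this hB.le
  · exact ⟨α, inner_zero_left _, h.inner_self_pos hα⟩

/-- For large `r`, uniformly in `β ∈ Δ ∪ {0}` and in `t`, the point `r α` lies within a
fixed distance of `t β` only if `β = ± α`. -/
theorem eventually_not_bounded (h : IsPosSys Δ P) {α : E} (hα : α ∈ Δ) (C : ℝ) :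
    ∃ R : ℤ, 1 ≤ R ∧ ∀ r : ℤ, R ≤ r → ∀ β, (β ∈ Δ ∨ β = 0) → ∀ t : ℝ,
      ‖(r : ℝ) • α - t • β‖ ≤ C → β = α ∨ β = -α := by
  classical
  have key : ∀ β ∈ insert 0 Δ, ∀ᶠ r : ℤ in Filter.atTop, ∀ t : ℝ,
      ‖(r : ℝ) • α - t • β‖ ≤ C → β = α ∨ β = -α := by
    intro β hβ
    by_cases hc : β = α ∨ β = -α
    · exact Filter.Eventually.of_forall fun _ _ _ => hc
    obtain ⟨u, hu0, hu⟩ := h.exists_orthogonal_pos hα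
      ((Finset.mem_insert.1 hβ).symm) (fun e => hc (Or.inl e)) (fun e => hc (Or.inr e))
    have hlim := (tendsto_intCast_atTop_atTop (R := ℝ)).eventually_gt_atTop (C * ‖u‖ / ⟪α, u⟫)
    filter_upwards [hlim] with r hr t ht
    rw [div_lt_iff₀ hu] at hr
    have h1 : ⟪(r : ℝ) • α - t • β, u⟫ = r * ⟪α, u⟫ := by
      rw [inner_sub_left, real_inner_smul_left, real_inner_smul_left, hu0, mul_zero, sub_zero]
    have h2 := real_inner_le_norm ((r : ℝ) • α - t • β) u
    have h3 := mul_le_mul_of_nonneg_right ht (norm_nonneg u)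
    linarith
  obtain ⟨R, hR⟩ := Filter.eventually_atTop.1 ((Filter.eventually_all_finset _).2 key)
  refine ⟨max 1 R, le_max_left _ _, fun r hr β hβ t => ?_⟩
  exact hR r ((le_max_right _ _).trans hr) β (Finset.mem_insert.2 hβ.symm) t

/-- Equal norms of `ρ` and `ρ + k α` leave only `k = 0` or `ρ + k α = s_α ρ`; both cases then
follow from triviality of the stabiliser of `ρ`. -/
theorem eq_or_eq_rootRefl (h : IsPosSys Δ P) {ρ : E} (hρ : (2 : ℝ) • ρ = ∑ α ∈ P, α)
    {α : E} (hα : α ∈ Δ) {w : E ≃ₗᵢ[ℝ] E}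
    (hw : w ∈ Subgroup.closure {w : E ≃ₗᵢ[ℝ] E | ∃ α ∈ Δ, w = rootRefl α}) {k : ℝ}
    (hk : w ρ = ρ + k • α) : w = 1 ∨ w = rootRefl α := by
  have hA := h.inner_self_pos hα
  have hnorm : ⟪w ρ, w ρ⟫ = ⟪ρ, ρ⟫ := w.inner_map_map ρ ρ
  rw [hk] at hnorm
  simp only [inner_add_left, inner_add_right, real_inner_smul_left, real_inner_smul_right,
    real_inner_comm ρ α] at hnorm
  have hfac : k * (2 * ⟪ρ, α⟫ + k * ⟪α, α⟫) = 0 := by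
    rw [real_inner_comm α ρ] at *
    linarith
  rcases mul_eq_zero.1 hfac with h0 | h0
  · left
    exact h.eq_one_of_map_rho hρ hw (by rw [hk, h0, zero_smul, add_zero])
  · right
    have hkv : k = -(2 * ⟪ρ, α⟫ / ⟪α, α⟫) := by
      field_simp
      linarith
    have hw' : w ρ = rootRefl α ρ := by
      rw [hk, rootRefl_apply, hkv, neg_smul, sub_eq_add_neg]
    have h1 : rootRefl α * w = 1 :=
      h.eq_one_of_map_rho hρ
        (mul_mem (Subgroup.subset_closure ⟨α, hα, rfl⟩) hw)
        (by rw [LinearIsometryEquiv.coe_mul, Function.comp_apply, hw', rootRefl_rootRefl])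
    have h2 : rootRefl α * (rootRefl α * w) = w := by
      rw [← mul_assoc, rootRefl_mul_self, one_mul]
    rw [← h2, h1, mul_one]

end IsPosSys

end RootSystems

theorem stmt15
    (E : Type) [NormedAddCommGroup E] [InnerProductSpace ℝ E] [FiniteDimensional ℝ E]
    (Δ : Finset E)
    (hspan : Submodule.span ℝ (Δ : Set E) = ⊤)
    (h0 : (0 : E) ∉ Δ)
    (hcrys : ∀ α ∈ Δ, ∀ β ∈ Δ, ∃ n : ℤ, 2 * ⟪β, α⟫ = (n : ℝ) * ⟪α, α⟫)
    (hrefl : ∀ α ∈ Δ, ∀ β ∈ Δ, β - (2 * ⟪β, α⟫ / ⟪α, α⟫) • α ∈ Δ)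
    (hred : ∀ α ∈ Δ, ∀ t : ℝ, t • α ∈ Δ → t = 1 ∨ t = -1)
    (Δpos : Finset E) (hsub : Δpos ⊆ Δ)
    (hpos : ∀ α ∈ Δ, (α ∈ Δpos ↔ ¬(-α ∈ Δpos)))
    (hclosed : ∀ α ∈ Δpos, ∀ β ∈ Δpos, α + β ∈ Δ → α + β ∈ Δpos)
    (ρ : E) (hρ : (2 : ℝ) • ρ = ∑ α ∈ Δpos, α)
    (W : Subgroup (E ≃ₗᵢ[ℝ] E))
    (hW : W = Subgroup.closure
      {w : E ≃ₗᵢ[ℝ] E | ∃ α ∈ Δ, ∀ v : E, w v = v - (2 * ⟪v, α⟫ / ⟪α, α⟫) • α}) :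
    ∀ α ∈ Δpos, ∃ R : ℤ, 1 ≤ R ∧ ∀ r : ℤ, R ≤ r →
      ∀ w ∈ W, ∀ r' : ℤ, 1 ≤ r' → ∀ α' : E, (α' ∈ Δ ∨ α' = 0) →
        (r : ℝ) • α = w ((r' : ℝ) • α' + ρ) - ρ →
        ((∀ v : E, w v = v) ∨ (∀ v : E, w v = v - (2 * ⟪v, α⟫ / ⟪α, α⟫) • α)) := by
  intro α hα
  have h : IsPosSys Δ Δpos := ⟨h0, hcrys, hrefl, hred, hsub, hpos, hclosed⟩
  simp only [← eq_rootRefl_iff] at hW ⊢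
  subst hW
  have hαΔ := hsub hα
  obtain ⟨R, hR1, hR⟩ := h.eventually_not_bounded hαΔ (2 * ‖ρ‖)
  refine ⟨R, hR1, fun r hr w hw r' _ α' hα' e => ?_⟩
  have hβ : w α' ∈ Δ ∨ w α' = 0 := by
    rcases hα' with hα' | rfl
    · left
      obtain ⟨L, hL, rfl⟩ := h.exists_word hw
      exact h.word_mem hL hα'
    · exact Or.inr (map_zero w)
  have e' : (r : ℝ) • α - (r' : ℝ) • w α' = w ρ - ρ := by
    rw [e, map_add, map_smul]; abel
  have hb : ‖(r : ℝ) • α - (r' : ℝ) • w α'‖ ≤ 2 * ‖ρ‖ := by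
    rw [e']
    have := norm_sub_le (w ρ) ρ
    rw [w.norm_map] at this
    linarith
  have hk : ∃ k : ℝ, w ρ = ρ + k • α := by
    rcases hR r hr _ hβ _ hb with e1 | e1
    · refine ⟨r - r', ?_⟩
      rw [sub_smul, ← sub_eq_iff_eq_add', ← e', e1]
    · refine ⟨r + r', ?_⟩
      rw [add_smul, ← sub_eq_iff_eq_add', ← e', e1, smul_neg, sub_neg_eq_add]
  obtain ⟨k, hk⟩ := hk
  rcases h.eq_or_eq_rootRefl hρ hαΔ hw hk with rfl | rfl
  · exact Or.inl fun v => rfl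
  · exact Or.inr rfl
end
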